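/- Let Γ be a Dini-smooth Jordan curve (a Jordan curve admitting a parametrization with continuous nonvanishing derivative whose modulus of continuity ω satisfies ∫₀¹ ω(t)/t dt < ∞). Then φ(z)^{−n} F_n(z) → 1 as n → ∞ uniformly for z ∈ Γ, and in particular lim_{n→∞} ‖F_n‖_Γ = 1. -/

import Mathlib

open Filter Topology MeasureTheory Set

noncomputable section

/-- The supremum norm of `f` over the set `Γ`. -/
def supNorm (Γ : Set ℂ) (f : ℂ → ℂ) : ℝ := sSup ((fun z => ‖f z‖) '' Γ)

/-- `Γ` is a Jordan curve: the image of a continuous `2π`-periodic map `ℝ → ℂ` that is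
injective modulo the period. -/
def IsJordanCurve (Γ : Set ℂ) : Prop :=
  ∃ f : ℝ → ℂ, Continuous f ∧ Function.Periodic f (2 * Real.pi) ∧
    (∀ s t : ℝ, f s = f t → ∃ n : ℤ, t - s = n * (2 * Real.pi)) ∧
    Γ = Set.range f

/-- The modulus of continuity of `g` on the interval `[a, b]`, evaluated at `t`. -/
def modCont (g : ℝ → ℂ) (a b t : ℝ) : ℝ :=
  sSup {d : ℝ | ∃ s₁ ∈ Set.Icc a b, ∃ s₂ ∈ Set.Icc a b, |s₁ - s₂| ≤ t ∧ d = ‖g s₁ - g s₂‖}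

/-- `γ`, with derivative `γ'`, parametrizes a Dini-smooth Jordan arc on `[a, b]`:
`γ'` is continuous and nonvanishing on `[a, b]` and its modulus of continuity `ω`
satisfies `∫₀¹ ω(t)/t dt < ∞`. -/
structure IsDiniSmoothArc (γ γ' : ℝ → ℂ) (a b : ℝ) : Prop where
  lt : a < b
  inj : Set.InjOn γ (Set.Icc a b)
  deriv : ∀ s ∈ Set.Icc a b, HasDerivWithinAt γ (γ' s) (Set.Icc a b) s
  cont : ContinuousOn γ' (Set.Icc a b)
  nonzero : ∀ s ∈ Set.Icc a b, γ' s ≠ 0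
  dini : MeasureTheory.IntegrableOn (fun t => modCont γ' a b t / t) (Set.Ioc (0 : ℝ) 1)

/-- A piecewise Dini-smooth Jordan curve: a Jordan curve which is the union of finitely many
Dini-smooth arcs. -/
def IsPiecewiseDiniSmoothJordanCurve (Γ : Set ℂ) : Prop :=
  IsJordanCurve Γ ∧
    ∃ (N : ℕ) (γ γ' : Fin N → ℝ → ℂ) (a b : Fin N → ℝ),
      (∀ i, IsDiniSmoothArc (γ i) (γ' i) (a i) (b i)) ∧
      Γ = ⋃ i, γ i '' Set.Icc (a i) (b i)

/-- The unbounded connected component `Ω` of the complement of `Γ` (in the finite plane). -/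
def exteriorDomain (Γ : Set ℂ) : Set ℂ :=
  {z | z ∈ Γᶜ ∧ ¬ Bornology.IsBounded (connectedComponentIn Γᶜ z)}

/-- `φ` is the canonical exterior conformal map of `Γ` onto `{|w| > 1}` with `φ(∞) = ∞` and
`φ(z)/z → c⁻¹` as `z → ∞`; the constant `c` is then the logarithmic capacity of `Γ`. -/
structure IsExteriorMap (Γ : Set ℂ) (φ : ℂ → ℂ) (c : ℝ) : Prop where
  cpos : 0 < c
  diff : DifferentiableOn ℂ φ (exteriorDomain Γ)
  bij : Set.BijOn φ (exteriorDomain Γ) {w : ℂ | 1 < ‖w‖}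
  tendsto : Filter.Tendsto (fun z => φ z / z)
    (Bornology.cobounded ℂ ⊓ Filter.principal (exteriorDomain Γ)) (nhds ((c : ℂ)⁻¹))

/-- `F` is the `n`-th Faber polynomial of `Γ`: the unique polynomial with
`φ(z)^n − F(z) → 0` as `z → ∞` in the exterior domain. -/
def IsFaberPoly (Γ : Set ℂ) (φ : ℂ → ℂ) (n : ℕ) (F : Polynomial ℂ) : Prop :=
  Filter.Tendsto (fun z => φ z ^ n - F.eval z)
    (Bornology.cobounded ℂ ⊓ Filter.principal (exteriorDomain Γ)) (nhds 0)

/-- `ψ` is the inverse of `φ`, extended to a homeomorphism of `{|w| ≥ 1}` onto the closure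
of the exterior domain; on the unit circle it parametrizes `Γ`. -/
structure IsExteriorParam (Γ : Set ℂ) (φ ψ : ℂ → ℂ) : Prop where
  cont : ContinuousOn ψ {w : ℂ | 1 ≤ ‖w‖}
  inj : Set.InjOn ψ {w : ℂ | 1 ≤ ‖w‖}
  inv : ∀ w : ℂ, 1 < ‖w‖ → ψ w ∈ exteriorDomain Γ ∧ φ (ψ w) = w
  boundary : ∀ w : ℂ, ‖w‖ = 1 → ψ w ∈ Γ
  boundary_surj : ∀ z ∈ Γ, ∃ w : ℂ, ‖w‖ = 1 ∧ ψ w = z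

/-- `T` is the `n`-th Chebyshev polynomial of `Γ`: the monic polynomial of degree `n`
minimizing the supremum norm over `Γ`. -/
def IsChebyshevPoly (Γ : Set ℂ) (n : ℕ) (T : Polynomial ℂ) : Prop :=
  T.Monic ∧ T.natDegree = n ∧
    ∀ P : Polynomial ℂ, P.Monic → P.natDegree = n →
      supNorm Γ (fun z => T.eval z) ≤ supNorm Γ (fun z => P.eval z)

/-- `v` is a secant-argument function of `Γ = ψ(unit circle)` at `θ` (relative to `α` with
`α < θ < α + 2π`): a bounded-variation branch of `t ↦ arg (ψ(e^{it}) − ψ(e^{iθ}))` on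
`[α, α + 2π]`, continuous on `[α, θ)` and on `(θ, α + 2π]`, normalized by `v θ = v(θ+)`
and by requiring the jump `v(θ+) − v(θ−)` to lie in `[0, 2π]`. -/
structure IsSecantArg (ψ : ℂ → ℂ) (θ α : ℝ) (v : ℝ → ℝ) : Prop where
  hα : α < θ
  hθ : θ < α + 2 * Real.pi
  bv : BoundedVariationOn v (Set.Icc α (α + 2 * Real.pi))
  contBefore : ContinuousOn v (Set.Ico α θ)
  contAfter : ContinuousOn v (Set.Ioc θ (α + 2 * Real.pi))
  rightCont : ContinuousWithinAt v (Set.Ici θ) θ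
  jump_mem : ∃ L : ℝ, Filter.Tendsto v (nhdsWithin θ (Set.Iio θ)) (nhds L) ∧
    v θ - L ∈ Set.Icc 0 (2 * Real.pi)
  branch : ∀ t ∈ Set.Icc α (α + 2 * Real.pi), t ≠ θ →
    Complex.exp (Complex.I * (v t : ℂ))
      = (ψ (Complex.exp (Complex.I * (t : ℂ))) - ψ (Complex.exp (Complex.I * (θ : ℂ))))
        / ((‖ψ (Complex.exp (Complex.I * (t : ℂ))) - ψ (Complex.exp (Complex.I * (θ : ℂ)))‖ : ℂ))

/-- The exterior angle of `Γ = ψ(unit circle)` at the boundary point `ψ(e^{iθ})` equals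
`lam * π`, expressed through the jump `v(θ+) − v(θ−) = lam * π` of a secant-argument
function at `θ`. -/
def HasExteriorAngleAt (ψ : ℂ → ℂ) (θ lam : ℝ) : Prop :=
  ∃ (α : ℝ) (v : ℝ → ℝ), IsSecantArg ψ θ α v ∧
    Filter.Tendsto v (nhdsWithin θ (Set.Iio θ)) (nhds (v θ - lam * Real.pi))

/-- The set `Θ_Γ = {θ_k + 2πj}` of corner parameters modulo `2π`. -/
def cornerSet {l : ℕ} (θk : Fin l → ℝ) : Set ℝ :=
  {x | ∃ (k : Fin l) (j : ℤ), x = θk k + j * (2 * Real.pi)}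

/-- `(μp, μn)` realizes the Lebesgue–Stieltjes (signed) measure `dv` of `v` on `(α, β]`:
both are finite measures and `μp − μn` has the increments of `v`. -/
structure IsLSPair (v : ℝ → ℝ) (α β : ℝ) (μp μn : MeasureTheory.Measure ℝ) : Prop where
  finp : MeasureTheory.IsFiniteMeasure μp
  finn : MeasureTheory.IsFiniteMeasure μn
  incr : ∀ s t : ℝ, α ≤ s → s ≤ t → t ≤ β →
    (μp (Set.Ioc s t)).toReal - (μn (Set.Ioc s t)).toReal = v t - v s


/-- The global modulus of continuity of `g : ℝ → ℂ`, evaluated at `t`. -/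
def modContGlobal (g : ℝ → ℂ) (t : ℝ) : ℝ :=
  sSup {d : ℝ | ∃ s₁ s₂ : ℝ, |s₁ - s₂| ≤ t ∧ d = ‖g s₁ - g s₂‖}

/-- `Γ` is a Dini-smooth Jordan curve: it admits a (periodic) parametrization with continuous
nonvanishing derivative whose modulus of continuity `ω` satisfies `∫₀¹ ω(t)/t dt < ∞`. -/
def IsDiniSmoothJordanCurve (Γ : Set ℂ) : Prop :=
  ∃ f f' : ℝ → ℂ, Continuous f ∧ Function.Periodic f (2 * Real.pi) ∧
    (∀ s t : ℝ, f s = f t → ∃ n : ℤ, t - s = n * (2 * Real.pi)) ∧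
    (∀ s : ℝ, HasDerivAt f (f' s) s) ∧ Continuous f' ∧ (∀ s : ℝ, f' s ≠ 0) ∧
    MeasureTheory.IntegrableOn (fun t => modContGlobal f' t / t) (Set.Ioc (0 : ℝ) 1) ∧
    Γ = Set.range f

/-- The `n`-th Taylor coefficient of `A` at the origin. -/
def taylorCoeff (A : ℂ → ℂ) (n : ℕ) : ℂ := iteratedDeriv n A 0 / n.factorial

lemma integral_zpow_neg_mul_circleMap {A : ℂ → ℂ} (hA : DifferentiableOn ℂ A (Metric.ball 0 1))
    {ρ : ℝ} (h0 : 0 < ρ) (h1 : ρ < 1) (n : ℕ) :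
    ∫ θ in 0..2 * Real.pi, circleMap 0 ρ θ ^ (-(n : ℤ)) * A (circleMap 0 ρ θ)
      = 2 * Real.pi * taylorCoeff A n := by
  have h := DifferentiableOn.circleIntegral_one_div_sub_center_pow_smul h0 n
    (hA.mono (Metric.closedBall_subset_ball h1))
  rw [circleIntegral] at h
  have h2 : ∀ θ : ℝ, deriv (circleMap 0 ρ) θ • ((1 / (circleMap 0 ρ θ - 0) ^ (n + 1)) •
      A (circleMap 0 ρ θ)) =
      Complex.I * (circleMap 0 ρ θ ^ (-(n : ℤ)) * A (circleMap 0 ρ θ)) := by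
    intro θ
    have hne : circleMap 0 ρ θ ≠ 0 := circleMap_ne_center h0.ne'
    simp only [deriv_circleMap, smul_eq_mul, sub_zero, zpow_neg, zpow_natCast]
    field_simp
    ring
  rw [intervalIntegral.integral_congr (g := fun θ => Complex.I *
    (circleMap 0 ρ θ ^ (-(n : ℤ)) * A (circleMap 0 ρ θ))) (fun θ _ => h2 θ),
    intervalIntegral.integral_const_mul, smul_eq_mul] at h
  apply mul_left_cancel₀ Complex.I_ne_zero
  rw [h, taylorCoeff]
  ring

lemma integral_pow_mul_circleMap {A : ℂ → ℂ} (hA : DifferentiableOn ℂ A (Metric.ball 0 1))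
    {ρ : ℝ} (h0 : 0 < ρ) (h1 : ρ < 1) {n : ℕ} (hn : 1 ≤ n) :
    ∫ θ in 0..2 * Real.pi, circleMap 0 ρ θ ^ n * A (circleMap 0 ρ θ) = 0 := by
  have h := integral_zpow_neg_mul_circleMap (A := fun u => u ^ n * A u)
    ((differentiable_pow n).differentiableOn.mul hA) h0 h1 0
  simpa [taylorCoeff, Nat.ne_of_gt hn] using h

lemma integral_circleMap_eq {A : ℂ → ℂ} (hA : DifferentiableOn ℂ A (Metric.ball 0 1))
    {ρ : ℝ} (h0 : 0 < ρ) (h1 : ρ < 1) :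
    ∫ θ in 0..2 * Real.pi, A (circleMap 0 ρ θ) = 2 * Real.pi * A 0 := by
  simpa [taylorCoeff] using integral_zpow_neg_mul_circleMap hA h0 h1 0

/-- A nonvanishing holomorphic function on the unit disk has a holomorphic square root. -/
lemma exists_differentiableOn_sq_eq {Q : ℂ → ℂ} (hQ : DifferentiableOn ℂ Q (Metric.ball 0 1))
    (hne : ∀ u ∈ Metric.ball (0 : ℂ) 1, Q u ≠ 0) :
    ∃ g : ℂ → ℂ, DifferentiableOn ℂ g (Metric.ball 0 1) ∧
      ∀ u ∈ Metric.ball (0 : ℂ) 1, g u ^ 2 = Q u := by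
  have hd : DifferentiableOn ℂ (fun u => deriv Q u / Q u) (Metric.ball 0 1) :=
    (hQ.deriv Metric.isOpen_ball).div hQ hne
  obtain ⟨L, hL⟩ := hd.isConservativeOn.isExactOn_ball hd.continuousOn
  have h0 : (0 : ℂ) ∈ Metric.ball (0 : ℂ) 1 := by simp
  have hder : ∀ u ∈ Metric.ball (0 : ℂ) 1,
      HasDerivAt (fun u => Q u * Complex.exp (-L u)) 0 u := by
    intro u hu
    have := ((hQ.differentiableAt (Metric.isOpen_ball.mem_nhds hu)).hasDerivAt).mul
      ((hL u hu).neg.cexp)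
    convert! this using 1
    have := hne u hu
    field_simp
    ring
  have hconst : ∀ u ∈ Metric.ball (0 : ℂ) 1,
      Q u * Complex.exp (-L u) = Q 0 * Complex.exp (-L 0) := fun u hu =>
    Metric.isOpen_ball.is_const_of_deriv_eq_zero (convex_ball (0 : ℂ) 1).isPreconnected
      (fun v hv => (hder v hv).differentiableAt.differentiableWithinAt)
      (fun v hv => (hder v hv).deriv) hu h0
  obtain ⟨a, ha⟩ := IsAlgClosed.exists_pow_nat_eq (Q 0 * Complex.exp (-L 0)) (n := 2) two_pos
  refine ⟨fun u => a * Complex.exp (L u / 2), fun u hu =>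
    ((((hL u hu).differentiableAt).div_const 2).cexp.const_mul a).differentiableWithinAt, ?_⟩
  intro u hu
  have := hconst u hu
  rw [mul_pow, ha, ← this, ← Complex.exp_nat_mul, mul_assoc, ← Complex.exp_add]
  simp [mul_div_cancel₀]

lemma taylorCoeff_sq {g : ℂ → ℂ} (hg : DifferentiableOn ℂ g (Metric.ball 0 1)) (n : ℕ) :
    taylorCoeff (fun u => g u ^ 2) n
      = ∑ k ∈ Finset.range (n + 1), taylorCoeff g k * taylorCoeff g (n - k) := by
  have hc : ContDiffAt ℂ n g 0 :=
    ((hg.analyticOnNhd Metric.isOpen_ball) 0 (by simp)).contDiffAt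
  unfold taylorCoeff
  have : iteratedDeriv n (fun u => g u ^ 2) 0 = _ :=
    (by simp [pow_two]; exact iteratedDeriv_mul hc hc)
  rw [this, Finset.sum_div]
  refine Finset.sum_congr rfl fun k hk => ?_
  have hk' : k ≤ n := Nat.lt_succ_iff.1 (Finset.mem_range.1 hk)
  rw [Nat.cast_choose ℂ hk']
  have h1 : (n.factorial : ℂ) ≠ 0 := by exact_mod_cast n.factorial_ne_zero
  have h2 : (k.factorial : ℂ) ≠ 0 := by exact_mod_cast k.factorial_ne_zero
  have h3 : ((n - k).factorial : ℂ) ≠ 0 := by exact_mod_cast (n - k).factorial_ne_zero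
  field_simp

lemma sum_sq_taylorCoeff_le {g : ℂ → ℂ} (hg : DifferentiableOn ℂ g (Metric.ball 0 1))
    {ρ : ℝ} (h0 : 0 < ρ) (h1 : ρ < 1) (N : ℕ) :
    ∑ k ∈ Finset.range N, (‖taylorCoeff g k‖ * ρ ^ k) ^ 2
      ≤ (2 * Real.pi)⁻¹ * ∫ θ in 0..2 * Real.pi, ‖g (circleMap 0 ρ θ)‖ ^ 2 := by
  have hcont : Continuous fun θ : ℝ => g (circleMap 0 ρ θ) :=
    hg.continuousOn.comp_continuous (continuous_circleMap 0 ρ)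
      (fun θ => by simp [abs_of_pos h0, h1])
  have hL2 : MemLp (fun θ : ℝ => g (circleMap 0 ρ θ)) 2
      (volume.restrict (Ioc 0 (2 * Real.pi))) := by
    obtain ⟨C, hC⟩ := (isCompact_Icc (a := (0 : ℝ)) (b := 2 * Real.pi)).exists_bound_of_continuousOn
      hcont.continuousOn
    refine MemLp.of_bound hcont.aestronglyMeasurable C ?_
    filter_upwards [ae_restrict_mem measurableSet_Ioc] with θ hθ
    exact hC θ (Ioc_subset_Icc_self hθ)
  have hs := hasSum_sq_fourierCoeffOn Real.two_pi_pos hL2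
  have hcoef : ∀ k : ℕ, ‖taylorCoeff g k‖ * ρ ^ k
      = ‖fourierCoeffOn Real.two_pi_pos (fun θ : ℝ => g (circleMap 0 ρ θ)) (k : ℤ)‖ := by
    intro k
    have h := integral_zpow_neg_mul_circleMap hg h0 h1 k
    rw [fourierCoeffOn_eq_integral]
    have h3 : ∀ θ : ℝ, (fourier (-(k : ℤ)) (θ : AddCircle (2 * Real.pi - 0))) •
        g (circleMap 0 ρ θ) =
        (ρ : ℂ) ^ k * (circleMap 0 ρ θ ^ (-(k : ℤ)) * g (circleMap 0 ρ θ)) := by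
      intro θ
      rw [fourier_coe_apply, circleMap_zero, mul_zpow, ← Complex.exp_int_mul, smul_eq_mul]
      have hρ : (ρ : ℂ) ≠ 0 := by exact_mod_cast h0.ne'
      have hpi : (Real.pi : ℂ) ≠ 0 := by exact_mod_cast Real.pi_ne_zero
      have he : 2 * (Real.pi : ℂ) * Complex.I * ((-(k : ℤ) : ℤ) : ℂ) * θ
          / ((2 * Real.pi - 0 : ℝ) : ℂ) = ((-(k : ℤ) : ℤ) : ℂ) * (θ * Complex.I) := by
        push_cast
        rw [sub_zero]
        field_simp
      rw [he, zpow_neg, zpow_natCast]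
      generalize Complex.exp _ = E
      field_simp
    simp only [h3, intervalIntegral.integral_const_mul, h, sub_zero]
    simp only [norm_smul, norm_mul, norm_pow, Complex.norm_real, Real.norm_eq_abs, abs_of_pos h0,
      abs_of_pos Real.pi_pos, one_div, norm_inv]
    have := Real.pi_pos
    simp
    field_simp
  have hle := sum_le_hasSum ((Finset.range N).map ⟨((↑) : ℕ → ℤ), Nat.cast_injective⟩)
    (fun i _ => by positivity) hs
  rw [Finset.sum_map] at hle
  simp only [hcoef]
  simpa using hle

/-- The Taylor coefficients of the square of an `H²` function tend to zero. -/
lemma tendsto_taylorCoeff_sq_of_bounded {g : ℂ → ℂ} (hg : DifferentiableOn ℂ g (Metric.ball 0 1))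
    {V : ℝ} (hV : ∀ ρ : ℝ, 0 < ρ → ρ < 1 →
      ∫ θ in 0..2 * Real.pi, ‖g (circleMap 0 ρ θ)‖ ^ 2 ≤ V) :
    Tendsto (taylorCoeff fun u => g u ^ 2) atTop (𝓝 0) := by
  set a : ℕ → ℝ := fun k => ‖taylorCoeff g k‖ with ha
  have hsum : Summable fun k => a k ^ 2 := by
    refine summable_of_sum_range_le (c := (2 * Real.pi)⁻¹ * V) (fun k => by positivity) fun N => ?_
    have ht : Tendsto (fun ρ : ℝ => ∑ k ∈ Finset.range N, (a k * ρ ^ k) ^ 2) (𝓝[<] 1)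
        (𝓝 (∑ k ∈ Finset.range N, (a k * 1 ^ k) ^ 2)) :=
      (Continuous.tendsto (by fun_prop) 1).mono_left nhdsWithin_le_nhds
    simp only [one_pow, mul_one] at ht
    refine le_of_tendsto ht ?_
    filter_upwards [Ioo_mem_nhdsLT (zero_lt_one' ℝ)] with ρ hρ
    refine (sum_sq_taylorCoeff_le hg hρ.1 hρ.2 N).trans ?_
    have := Real.pi_pos
    gcongr
    exact hV ρ hρ.1 hρ.2
  set S := ∑' k, a k ^ 2
  have htail := tendsto_sum_nat_add fun k => a k ^ 2
  have hbound : ∀ N n : ℕ, 2 * N ≤ n →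
      ‖taylorCoeff (fun u => g u ^ 2) n‖ ≤ 2 * (√(∑' k, a (k + N) ^ 2) * √S) := by
    intro N n hn
    have hsN : Summable fun k => a (k + N) ^ 2 := (summable_nat_add_iff N).2 hsum
    have hCS : ∑ k ∈ Finset.Icc N n, a k * a (n - k) ≤ √(∑' k, a (k + N) ^ 2) * √S := by
      refine (Real.sum_mul_le_sqrt_mul_sqrt _ _ _).trans ?_
      gcongr
      · rw [show Finset.Icc N n = (Finset.range (n + 1 - N)).map (addRightEmbedding N) by
          ext k; simp only [Finset.mem_Icc, Finset.mem_map, Finset.mem_range,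
            addRightEmbedding_apply]
          constructor
          · intro h; exact ⟨k - N, by omega, by omega⟩
          · rintro ⟨j, hj, rfl⟩; omega, Finset.sum_map]
        exact hsN.sum_le_tsum _ fun k _ => by positivity
      · rw [← Finset.sum_image (f := fun k => a k ^ 2) (g := fun k => n - k) (s := Finset.Icc N n)]
        · exact hsum.sum_le_tsum _ fun k _ => by positivity
        · intro x hx y hy hxy
          simp only [Finset.coe_Icc, mem_Icc] at hx hy
          simp only at hxy
          omega
    rw [taylorCoeff_sq hg]
    calc ‖∑ k ∈ Finset.range (n + 1), taylorCoeff g k * taylorCoeff g (n - k)‖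
        ≤ ∑ k ∈ Finset.range (n + 1), a k * a (n - k) := by
          refine (norm_sum_le _ _).trans (Finset.sum_le_sum fun k _ => by rw [norm_mul])
      _ ≤ ∑ k ∈ Finset.Icc N n, a k * a (n - k)
          + ∑ k ∈ Finset.range (n + 1) with n - k ∈ Finset.Icc N n, a k * a (n - k) := by
          have : Finset.range (n + 1) ⊆ Finset.Icc N n ∪
              (Finset.range (n + 1)).filter (fun k => n - k ∈ Finset.Icc N n) := by
            intro k hk
            simp only [Finset.mem_range, Finset.mem_union, Finset.mem_Icc, Finset.mem_filter] at *
            omega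
          refine (Finset.sum_le_sum_of_subset_of_nonneg this fun k _ _ => by positivity).trans ?_
          rw [← Finset.sum_union_inter]
          exact le_add_of_nonneg_right (Finset.sum_nonneg fun k _ => by positivity)
      _ = ∑ k ∈ Finset.Icc N n, a k * a (n - k) + ∑ k ∈ Finset.Icc N n, a k * a (n - k) := by
          congr 1
          refine Finset.sum_bij' (fun k _ => n - k) (fun k _ => n - k) ?_ ?_ ?_ ?_ ?_ <;>
            intro k hk <;>
            simp only [Finset.mem_range, Finset.mem_Icc, Finset.mem_filter] at * <;>
            first
            | omega
            | (rw [show n - (n - k) = k by omega, mul_comm])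
      _ ≤ 2 * (√(∑' k, a (k + N) ^ 2) * √S) := by linarith
  have hlim : Tendsto (fun N => 2 * (√(∑' k, a (k + N) ^ 2) * √S)) atTop (𝓝 0) := by
    have := ((htail.sqrt).mul_const √S).const_mul 2
    simpa using this
  rw [Metric.tendsto_atTop]
  intro ε hε
  obtain ⟨N, hN⟩ := (hlim.eventually (gt_mem_nhds hε)).exists
  exact ⟨2 * N, fun n hn => by simpa using (hbound N n hn).trans_lt hN⟩

lemma norm_integral_mul_deriv_sub_sum_le {G G' X : ℝ → ℂ} (hG : ∀ x, HasDerivAt G (G' x) x)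
    (hG' : Continuous G') (hX : Continuous X) {t : ℕ → ℝ} (ht : Monotone t) {N : ℕ}
    {c : ℕ → ℂ} {ε : ℝ}
    (hε : ∀ j < N, ∀ x ∈ Icc (t j) (t (j + 1)), ‖X x - c j‖ ≤ ε) :
    ‖(∫ x in t 0..t N, X x * G' x) - ∑ j ∈ Finset.range N, c j * (G (t (j + 1)) - G (t j))‖
      ≤ ε * ∫ x in t 0..t N, ‖G' x‖ := by
  have hint : ∀ a b, IntervalIntegrable (fun x => X x * G' x) volume a b :=
    fun a b => (hX.mul hG').intervalIntegrable a b
  have hint' : ∀ a b, IntervalIntegrable (fun x => ‖G' x‖) volume a b :=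
    fun a b => hG'.norm.intervalIntegrable a b
  rw [← intervalIntegral.sum_integral_adjacent_intervals fun k _ => hint _ _,
    ← intervalIntegral.sum_integral_adjacent_intervals fun k _ => hint' _ _,
    ← Finset.sum_sub_distrib, Finset.mul_sum]
  refine (norm_sum_le _ _).trans (Finset.sum_le_sum fun j hj => ?_)
  have hle : t j ≤ t (j + 1) := ht (Nat.le_succ j)
  rw [← intervalIntegral.integral_eq_sub_of_hasDerivAt (fun x _ => hG x)
    (hG'.intervalIntegrable _ _), ← intervalIntegral.integral_const_mul,
    ← intervalIntegral.integral_const_mul, ← intervalIntegral.integral_sub (hint _ _)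
      (((hG'.intervalIntegrable _ _).const_mul (c j)))]
  refine intervalIntegral.norm_integral_le_of_norm_le hle ?_
    ((hint' _ _).const_mul ε)
  refine Eventually.of_forall fun x hx => ?_
  rw [← sub_mul, norm_mul]
  gcongr
  exact hε j (Finset.mem_range.1 hj) x (Ioc_subset_Icc_self hx)

/-- A `2π`-periodic `C¹` curve `f`, together with a function `Ψ` on the closed unit disk
whose quotient `Ψ u / u` restricts to an increasing reparametrization of `f` on the unit circle. -/
structure DiskParam (Ψ : ℂ → ℂ) (f f' : ℝ → ℂ) (τ : ℝ → ℝ) : Prop where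
  diffContOnCl : DiffContOnCl ℂ Ψ (Metric.ball 0 1)
  ne_zero : ∀ u ∈ Metric.ball (0 : ℂ) 1, Ψ u - u * deriv Ψ u ≠ 0
  hasDerivAt : ∀ s, HasDerivAt f (f' s) s
  continuous_deriv : Continuous f'
  strictMono : StrictMono τ
  continuous_arg : Continuous τ
  arg_zero : τ 0 = 0
  arg_add : ∀ s, τ (s + 2 * Real.pi) = τ s + 2 * Real.pi
  boundary : ∀ s, f s = Ψ (circleMap 0 1 (τ s)) / circleMap 0 1 (τ s)

namespace DiskParam

variable {Ψ : ℂ → ℂ} {f f' : ℝ → ℂ} {τ : ℝ → ℝ}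

lemma periodic_circleMap_arg (D : DiskParam Ψ f f' τ) :
    Function.Periodic (fun s => circleMap 0 1 (τ s)) (2 * Real.pi) := fun s => by
  simp only [D.arg_add]
  exact periodic_circleMap 0 1 (τ s)

lemma periodic (D : DiskParam Ψ f f' τ) : Function.Periodic f (2 * Real.pi) := fun s => by
  rw [D.boundary, D.boundary s]
  have := D.periodic_circleMap_arg s
  simp only at this
  rw [this]

lemma periodic_deriv (D : DiskParam Ψ f f' τ) : Function.Periodic f' (2 * Real.pi) := fun s => by
  have h := (D.hasDerivAt (s + 2 * Real.pi)).comp_add_const s (2 * Real.pi)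
  have h2 : (fun x => f (x + 2 * Real.pi)) = f := funext D.periodic
  rw [h2] at h
  exact h.unique (D.hasDerivAt s)

lemma continuous (D : DiskParam Ψ f f' τ) : Continuous f :=
  continuous_iff_continuousAt.2 fun s => (D.hasDerivAt s).continuousAt

lemma surjective_arg (D : DiskParam Ψ f f' τ) : Function.Surjective τ := by
  have hper : ∀ n : ℕ, ∀ s, τ (s + n * (2 * Real.pi)) = τ s + n * (2 * Real.pi) := by
    intro n
    induction n with
    | zero => simp
    | succ n ih =>
      intro s
      rw [show s + (n + 1 : ℕ) * (2 * Real.pi) = (s + n * (2 * Real.pi)) + 2 * Real.pi by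
        push_cast; ring, D.arg_add, ih]
      push_cast; ring
  intro y
  obtain ⟨n, hn⟩ := exists_nat_gt (|y| / (2 * Real.pi))
  have hn' : |y| < n * (2 * Real.pi) := (div_lt_iff₀ Real.two_pi_pos).1 hn
  have h1 := hper n 0
  have h2 := hper n (-(n * (2 * Real.pi)))
  rw [neg_add_cancel, D.arg_zero] at h2
  rw [zero_add, D.arg_zero, zero_add] at h1
  refine mem_range_of_exists_le_of_exists_ge D.continuous_arg
    ⟨-(n * (2 * Real.pi)), ?_⟩ ⟨n * (2 * Real.pi), ?_⟩
  · linarith [neg_abs_le y]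
  · linarith [le_abs_self y]

lemma exists_inverse (D : DiskParam Ψ f f' τ) : ∃ h : ℝ → ℝ, Continuous h ∧ StrictMono h ∧
    (∀ t, τ (h t) = t) ∧ (∀ s, h (τ s) = s) ∧ ∀ t, h (t + 2 * Real.pi) = h t + 2 * Real.pi := by
  let e := D.strictMono.orderIsoOfSurjective τ D.surjective_arg
  have h1 : ∀ t, τ (e.symm t) = t := fun t => e.apply_symm_apply t
  have h2 : ∀ s, e.symm (τ s) = s := fun t => e.symm_apply_apply t
  refine ⟨e.symm, e.symm.continuous, e.symm.strictMono, h1, h2, fun t => ?_⟩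
  apply D.strictMono.injective
  rw [h1, D.arg_add, h1]

lemma sum_norm_sub_le (D : DiskParam Ψ f f' τ) {s : ℕ → ℝ} (hs : Monotone s) {N : ℕ}
    (hN : s N = s 0 + 2 * Real.pi) :
    ∑ j ∈ Finset.range N, ‖f (s (j + 1)) - f (s j)‖ ≤ ∫ x in 0..2 * Real.pi, ‖f' x‖ := by
  have hper : Function.Periodic (fun x => ‖f' x‖) (2 * Real.pi) := fun x => by
    simp only [D.periodic_deriv x]
  have := hper.intervalIntegral_add_eq (s 0) 0
  rw [zero_add] at this
  rw [← this, ← hN, ← intervalIntegral.sum_integral_adjacent_intervals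
    fun k _ => D.continuous_deriv.norm.intervalIntegrable _ _]
  refine Finset.sum_le_sum fun j _ => ?_
  rw [← intervalIntegral.integral_eq_sub_of_hasDerivAt (fun x _ => D.hasDerivAt x)
    (D.continuous_deriv.intervalIntegrable _ _)]
  exact intervalIntegral.norm_integral_le_integral_norm (hs (Nat.le_succ j))

lemma sum_norm_circleMap_sub_le (D : DiskParam Ψ f f' τ) {t : ℕ → ℝ} (ht : Monotone t) {N : ℕ}
    (hN : t N = t 0 + 2 * Real.pi) {ρ : ℝ} (h0 : 0 < ρ) (h1 : ρ < 1) :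
    ∑ j ∈ Finset.range N, ‖Ψ (circleMap 0 ρ (t (j + 1))) / circleMap 0 ρ (t (j + 1))
      - Ψ (circleMap 0 ρ (t j)) / circleMap 0 ρ (t j)‖ ≤ ρ⁻¹ * ∫ x in 0..2 * Real.pi, ‖f' x‖ := by
  obtain ⟨h, -, hmono, hτh, -, hadd⟩ := D.exists_inverse
  set d : ℕ → ℂ := fun j => Ψ (circleMap 0 ρ (t (j + 1))) / circleMap 0 ρ (t (j + 1))
      - Ψ (circleMap 0 ρ (t j)) / circleMap 0 ρ (t j) with hd
  let E : ℝ → ℂ := fun x => circleMap 0 1 x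
  have hE : ∀ x, ‖E x‖ = 1 := fun x => by simp [E]
  have hE0 : ∀ x, E x ≠ 0 := fun x => norm_ne_zero_iff.1 (by rw [hE]; exact one_ne_zero)
  let B : ℂ → ℂ := fun u => ∑ j ∈ Finset.range N, (starRingEnd ℂ (d j) / ‖d j‖) *
    (Ψ (u * E (t (j + 1))) / E (t (j + 1)) - Ψ (u * E (t j)) / E (t j))
  have hdc : ∀ x, DiffContOnCl ℂ (fun u => Ψ (u * E x) / E x) (Metric.ball 0 1) := by
    intro x
    have h1 : DiffContOnCl ℂ (fun u : ℂ => u * E x) (Metric.ball 0 1) :=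
      (differentiable_id.mul_const _).diffContOnCl
    have h2 := D.diffContOnCl.comp h1 (fun u hu => by simpa [hE] using hu)
    simp only [div_eq_inv_mul]
    exact h2.const_smul (E x)⁻¹
  have hBd : DiffContOnCl ℂ B (Metric.ball 0 1) := by
    have : ∀ j, DiffContOnCl ℂ (fun u => (starRingEnd ℂ (d j) / ‖d j‖) *
      (Ψ (u * E (t (j + 1))) / E (t (j + 1)) - Ψ (u * E (t j)) / E (t j))) (Metric.ball 0 1) :=
      fun j => ((hdc (t (j + 1))).sub (hdc (t j))).const_smul (starRingEnd ℂ (d j) / ‖d j‖)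
    refine ⟨DifferentiableOn.fun_sum fun j _ => (this j).1,
      continuousOn_finsetSum _ fun j _ => (this j).2⟩
  have hmulE : ∀ r x y : ℝ, circleMap 0 r x * E y = circleMap 0 r (x + y) := by
    intro r x y
    simp only [E, circleMap_zero]
    push_cast
    rw [add_mul, Complex.exp_add]
    ring
  have hbd : ∀ z ∈ frontier (Metric.ball (0 : ℂ) 1), ‖B z‖ ≤ ∫ x in 0..2 * Real.pi, ‖f' x‖ := by
    intro z hz
    rw [frontier_ball _ one_ne_zero, mem_sphere_zero_iff_norm] at hz
    have hz' : z = E z.arg := by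
      simp only [E, circleMap_zero]
      conv_lhs => rw [← Complex.norm_mul_exp_arg_mul_I z, hz]
    have hf : ∀ x, f (h (z.arg + x)) = Ψ (z * E x) / E x / z := by
      intro x
      have hz'' : circleMap 0 1 z.arg = z := hz'.symm
      rw [D.boundary, hτh, ← hmulE, hz'', div_div, mul_comm (E x)]
    have hz0 : z ≠ 0 := norm_ne_zero_iff.1 (by rw [hz]; exact one_ne_zero)
    refine le_trans ?_ (D.sum_norm_sub_le (s := fun j => h (z.arg + t j)) (N := N)
      (fun i j hij => hmono.monotone (by gcongr; exact ht hij)) ?_)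
    · refine (norm_sum_le _ _).trans (Finset.sum_le_sum fun j _ => ?_)
      rw [hf, hf, ← sub_div, norm_div _ z, hz, div_one, norm_mul]
      refine mul_le_of_le_one_left (norm_nonneg _) ?_
      simp only [norm_div, RCLike.norm_conj, Complex.norm_real, norm_norm]
      exact div_self_le_one _
    · simp only [hN, ← add_assoc, hadd]
  have hBρ : B ρ = ρ * ((∑ j ∈ Finset.range N, ‖d j‖ : ℝ) : ℂ) := by
    simp only [B]
    rw [Complex.ofReal_sum, Finset.mul_sum]
    refine Finset.sum_congr rfl fun j _ => ?_
    have hρ : ∀ x, (ρ : ℂ) * E x = circleMap 0 ρ x := fun x => by simp [E, circleMap_zero]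
    have hρ' : (ρ : ℂ) ≠ 0 := by exact_mod_cast h0.ne'
    have hdj : d j = (ρ : ℂ)⁻¹ *
        (Ψ (ρ * E (t (j + 1))) / E (t (j + 1)) - Ψ (ρ * E (t j)) / E (t j)) := by
      simp only [hd, ← hρ]
      have := hE0 (t j)
      have := hE0 (t (j + 1))
      field_simp
    have hdj' : Ψ (ρ * E (t (j + 1))) / E (t (j + 1)) - Ψ (ρ * E (t j)) / E (t j) = ρ * d j := by
      rw [hdj]; field_simp
    rw [hdj']
    by_cases hz : d j = 0
    · simp [hz]
    have : (‖d j‖ : ℂ) ≠ 0 := by exact_mod_cast norm_ne_zero_iff.2 hz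
    field_simp
    rw [← Complex.mul_conj', mul_comm]
  have hfin := Complex.norm_le_of_forall_mem_frontier_norm_le Metric.isBounded_ball hBd hbd
    (z := (ρ : ℂ)) (subset_closure (by simp [abs_of_pos h0, h1]))
  rw [hBρ, norm_mul, Complex.norm_real, Complex.norm_real, Real.norm_of_nonneg h0.le,
    Real.norm_of_nonneg (Finset.sum_nonneg fun j _ => norm_nonneg _)] at hfin
  rwa [inv_mul_eq_div, le_div_iff₀' h0]

lemma differentiableOn_fac (D : DiskParam Ψ f f' τ) :
    DifferentiableOn ℂ (fun u => Ψ u - u * deriv Ψ u) (Metric.ball 0 1) :=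
  D.diffContOnCl.1.sub (differentiableOn_id.mul (D.diffContOnCl.1.deriv Metric.isOpen_ball))

lemma hasDerivAt_div (D : DiskParam Ψ f f' τ) {u : ℂ} (hu : u ∈ Metric.ball (0 : ℂ) 1)
    (h0 : u ≠ 0) : HasDerivAt (fun v => Ψ v / v) (-(Ψ u - u * deriv Ψ u) / u ^ 2) u := by
  have := (D.diffContOnCl.1.differentiableAt (Metric.isOpen_ball.mem_nhds hu)).hasDerivAt.div
    (hasDerivAt_id u) h0
  convert! this using 1
  simp only [id]
  ring

lemma hasDerivAt_div_circleMap (D : DiskParam Ψ f f' τ) {ρ : ℝ} (h0 : 0 < ρ) (h1 : ρ < 1)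
    (θ : ℝ) : HasDerivAt (fun θ : ℝ => Ψ (circleMap 0 ρ θ) / circleMap 0 ρ θ)
      (-Complex.I * (Ψ (circleMap 0 ρ θ) - circleMap 0 ρ θ * deriv Ψ (circleMap 0 ρ θ))
        / circleMap 0 ρ θ) θ := by
  have hne : circleMap 0 ρ θ ≠ 0 := circleMap_ne_center h0.ne'
  have h := (D.hasDerivAt_div (u := circleMap 0 ρ θ) (by simp [abs_of_pos h0, h1]) hne).scomp θ
    (hasDerivAt_circleMap 0 ρ θ)
  convert! h using 1
  simp only [smul_eq_mul]
  field_simp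

lemma continuous_fac_circleMap (D : DiskParam Ψ f f' τ) {ρ : ℝ} (h0 : 0 < ρ) (h1 : ρ < 1) :
    Continuous fun θ : ℝ =>
      Ψ (circleMap 0 ρ θ) - circleMap 0 ρ θ * deriv Ψ (circleMap 0 ρ θ) :=
  D.differentiableOn_fac.continuousOn.comp_continuous (continuous_circleMap 0 ρ)
    (fun θ => by simp [abs_of_pos h0, h1])

lemma continuous_deriv_circleMap (D : DiskParam Ψ f f' τ) {ρ : ℝ} (h0 : 0 < ρ) (h1 : ρ < 1) :
    Continuous fun θ : ℝ =>
      -Complex.I * (Ψ (circleMap 0 ρ θ) - circleMap 0 ρ θ * deriv Ψ (circleMap 0 ρ θ))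
        / circleMap 0 ρ θ :=
  (continuous_const.mul (D.continuous_fac_circleMap h0 h1)).div (continuous_circleMap 0 ρ)
    fun _ => circleMap_ne_center h0.ne'

/-- The level curves of the parametrization are no longer than the boundary curve. -/
lemma integral_norm_deriv_circleMap_le (D : DiskParam Ψ f f' τ) {ρ : ℝ} (h0 : 0 < ρ)
    (h1 : ρ < 1) :
    ∫ θ in 0..2 * Real.pi,
      ‖-Complex.I * (Ψ (circleMap 0 ρ θ) - circleMap 0 ρ θ * deriv Ψ (circleMap 0 ρ θ))
        / circleMap 0 ρ θ‖ ≤ ρ⁻¹ * ∫ x in 0..2 * Real.pi, ‖f' x‖ := by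
  set G' : ℝ → ℂ := fun θ =>
    -Complex.I * (Ψ (circleMap 0 ρ θ) - circleMap 0 ρ θ * deriv Ψ (circleMap 0 ρ θ))
        / circleMap 0 ρ θ with hG'def
  have hG' : Continuous G' := D.continuous_deriv_circleMap h0 h1
  have hne : ∀ θ, G' θ ≠ 0 := fun θ => div_ne_zero (mul_ne_zero (neg_ne_zero.2 Complex.I_ne_zero)
    (D.ne_zero _ (by simp [abs_of_pos h0, h1]))) (circleMap_ne_center h0.ne')
  set X : ℝ → ℂ := fun θ => starRingEnd ℂ (G' θ) / ‖G' θ‖ with hXdef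
  have hX : Continuous X := (Complex.continuous_conj.comp hG').div
    (Complex.continuous_ofReal.comp hG'.norm) fun θ => by
      exact_mod_cast norm_ne_zero_iff.2 (hne θ)
  have hXG : ∀ θ, X θ * G' θ = (‖G' θ‖ : ℂ) := by
    intro θ
    have : (‖G' θ‖ : ℂ) ≠ 0 := by exact_mod_cast norm_ne_zero_iff.2 (hne θ)
    simp only [hXdef]
    field_simp
    rw [← Complex.mul_conj', mul_comm]
  have hXn : ∀ θ, ‖X θ‖ ≤ 1 := fun θ => by
    simp only [hXdef, norm_div, RCLike.norm_conj, Complex.norm_real, norm_norm]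
    exact div_self_le_one _
  set I := ∫ θ in 0..2 * Real.pi, ‖G' θ‖ with hI
  have hInn : 0 ≤ I := intervalIntegral.integral_nonneg Real.two_pi_pos.le fun _ _ => norm_nonneg _
  have key : ∀ ε > 0, I ≤ ρ⁻¹ * (∫ x in 0..2 * Real.pi, ‖f' x‖) + ε * I := by
    intro ε hε
    obtain ⟨δ, hδ, hδ'⟩ := Metric.uniformContinuousOn_iff.1
      ((isCompact_Icc (a := (0 : ℝ)) (b := 2 * Real.pi)).uniformContinuousOn_of_continuous
        hX.continuousOn) ε hε
    obtain ⟨N, hN⟩ := exists_nat_gt (2 * Real.pi / δ)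
    have hN0 : (0 : ℝ) < N := lt_of_le_of_lt (by have := Real.pi_pos; positivity) hN
    have hNδ : 2 * Real.pi / N < δ := by
      rw [div_lt_iff₀ hδ] at hN
      rw [div_lt_iff₀ hN0]; linarith
    set t : ℕ → ℝ := fun j => j * (2 * Real.pi / N) with ht
    have hpos : 0 < 2 * Real.pi / N := div_pos Real.two_pi_pos hN0
    have htm : Monotone t := fun i j hij => by
      simp only [ht]; gcongr
    have ht0 : t 0 = 0 := by simp [ht]
    have htN : t N = 2 * Real.pi := by simp only [ht]; field_simp
    have hb := norm_integral_mul_deriv_sub_sum_le (N := N) (c := fun j => X (t j)) (ε := ε)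
      (D.hasDerivAt_div_circleMap h0 h1) hG' hX htm (by
        intro j hj x hx
        rw [← dist_eq_norm]
        have hj0 : 0 ≤ t j := ht0 ▸ htm (Nat.zero_le j)
        have hj1 : t (j + 1) ≤ 2 * Real.pi := htN ▸ htm hj
        refine (hδ' x ⟨hj0.trans hx.1, hx.2.trans hj1⟩ (t j)
          ⟨hj0, (htm (Nat.le_succ j)).trans hj1⟩ ?_).le
        rw [Real.dist_eq, abs_of_nonneg (by linarith [hx.1])]
        have : t (j + 1) = t j + 2 * Real.pi / N := by simp only [ht]; push_cast; ring
        linarith [hx.2])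
    have hsum := D.sum_norm_circleMap_sub_le htm (by rw [htN, ht0, zero_add] : t N = t 0 + _) h0 h1
    rw [ht0, htN] at hb
    have h3 : (∫ x in 0..2 * Real.pi, X x * G' x) = ((I : ℝ) : ℂ) := by
      rw [hI, ← intervalIntegral.integral_ofReal]
      exact intervalIntegral.integral_congr fun x _ => hXG x
    change ‖(∫ x in 0..2 * Real.pi, X x * G' x) - _‖ ≤ ε * I at hb
    rw [h3] at hb
    have h4 : I = ‖((I : ℝ) : ℂ)‖ := by rw [Complex.norm_real, Real.norm_of_nonneg hInn]
    rw [h4]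
    conv_rhs => rw [← h4]
    refine (norm_le_norm_add_norm_sub' _ _).trans (add_le_add ?_ hb)
    refine (norm_sum_le _ _).trans (le_trans (Finset.sum_le_sum fun j _ => ?_) hsum)
    rw [norm_mul]
    exact mul_le_of_le_one_left (norm_nonneg _) (hXn _)
  have hlim : Tendsto (fun ε : ℝ => ρ⁻¹ * (∫ x in 0..2 * Real.pi, ‖f' x‖) + ε * I) (𝓝[>] 0)
      (𝓝 (ρ⁻¹ * (∫ x in 0..2 * Real.pi, ‖f' x‖) + 0 * I)) :=
    (Continuous.tendsto (by fun_prop) 0).mono_left nhdsWithin_le_nhds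
  rw [zero_mul, add_zero] at hlim
  exact ge_of_tendsto hlim (by filter_upwards [self_mem_nhdsWithin] with ε hε using key ε hε)

lemma integral_norm_fac_le (D : DiskParam Ψ f f' τ) {ρ : ℝ} (h0 : 0 < ρ) (h1 : ρ < 1) :
    ∫ θ in 0..2 * Real.pi,
      ‖Ψ (circleMap 0 ρ θ) - circleMap 0 ρ θ * deriv Ψ (circleMap 0 ρ θ)‖
        ≤ ∫ x in 0..2 * Real.pi, ‖f' x‖ := by
  have h := D.integral_norm_deriv_circleMap_le h0 h1
  simp only [norm_div, norm_mul, norm_neg, Complex.norm_I, one_mul, norm_circleMap_zero,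
    abs_of_pos h0] at h
  rw [intervalIntegral.integral_div, div_eq_inv_mul] at h
  exact le_of_mul_le_mul_left h (inv_pos.2 h0)

lemma tendsto_taylorCoeff_fac (D : DiskParam Ψ f f' τ) :
    Tendsto (taylorCoeff fun u => Ψ u - u * deriv Ψ u) atTop (𝓝 0) := by
  obtain ⟨g, hg, hgQ⟩ := exists_differentiableOn_sq_eq D.differentiableOn_fac D.ne_zero
  have h := tendsto_taylorCoeff_sq_of_bounded hg (V := ∫ x in 0..2 * Real.pi, ‖f' x‖) (by
    intro ρ h0 h1
    refine le_trans (le_of_eq ?_) (D.integral_norm_fac_le h0 h1)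
    refine intervalIntegral.integral_congr fun θ _ => ?_
    rw [← norm_pow, hgQ _ (by simp [abs_of_pos h0, h1])])
  refine h.congr fun n => ?_
  unfold taylorCoeff
  congr 1
  refine Filter.EventuallyEq.iteratedDeriv_eq n ?_
  filter_upwards [Metric.isOpen_ball.mem_nhds (by simp : (0 : ℂ) ∈ Metric.ball (0 : ℂ) 1)] with u hu
  exact hgQ u hu

/-- Integrals over level curves converge to the integral over the boundary curve. -/
lemma tendsto_integral_circleMap (D : DiskParam Ψ f f' τ) {X : ℂ → ℂ}
    (hX : ContinuousOn X (Metric.closedBall 0 1 \ {0})) :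
    Tendsto (fun ρ : ℝ => ∫ θ in 0..2 * Real.pi, X (circleMap 0 ρ θ) *
      (-Complex.I * (Ψ (circleMap 0 ρ θ) - circleMap 0 ρ θ * deriv Ψ (circleMap 0 ρ θ))
        / circleMap 0 ρ θ)) (𝓝[<] 1)
      (𝓝 (∫ s in 0..2 * Real.pi, X (circleMap 0 1 (τ s)) * f' s)) := by
  obtain ⟨h, -, hmono, hτh, hhτ, hadd⟩ := D.exists_inverse
  set V := ∫ x in 0..2 * Real.pi, ‖f' x‖ with hV
  have hV0 : 0 ≤ V := intervalIntegral.integral_nonneg Real.two_pi_pos.le fun _ _ => norm_nonneg _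
  have hcm : Continuous fun p : ℝ × ℝ => circleMap 0 p.1 p.2 := by
    simp only [circleMap_zero]; fun_prop
  have hXc : ∀ ρ : ℝ, 0 < ρ → ρ ≤ 1 → Continuous fun θ : ℝ => X (circleMap 0 ρ θ) :=
    fun ρ h0 h1 => hX.comp_continuous (continuous_circleMap 0 ρ)
      fun θ => ⟨by simp [abs_of_pos h0, h1], circleMap_ne_center h0.ne'⟩
  have hunif : ContinuousOn (fun p : ℝ × ℝ => X (circleMap 0 p.1 p.2))
      (Icc (1 / 2) 1 ×ˢ Icc 0 (2 * Real.pi)) :=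
    hX.comp hcm.continuousOn fun p hp => by
      have : 0 < p.1 := by linarith [hp.1.1]
      exact ⟨by simp [abs_of_pos this, hp.1.2], circleMap_ne_center this.ne'⟩
  rw [Metric.tendsto_nhds]
  intro ε hε
  set η := ε / (2 * (3 * V + 1)) with hη
  have hη0 : 0 < η := by positivity
  obtain ⟨δ, hδ, hδ'⟩ := Metric.uniformContinuousOn_iff.1
    ((isCompact_Icc.prod isCompact_Icc).uniformContinuousOn_of_continuous hunif) η hη0
  obtain ⟨N, hN⟩ := exists_nat_gt (2 * Real.pi / δ)
  have hN0 : (0 : ℝ) < N := lt_of_le_of_lt (by have := Real.pi_pos; positivity) hN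
  have hNδ : 2 * Real.pi / N < δ := by
    rw [div_lt_iff₀ hδ] at hN
    rw [div_lt_iff₀ hN0]; linarith
  set t : ℕ → ℝ := fun j => j * (2 * Real.pi / N) with ht
  have hpos : 0 < 2 * Real.pi / N := div_pos Real.two_pi_pos hN0
  have htm : Monotone t := fun i j hij => by simp only [ht]; gcongr
  have ht0 : t 0 = 0 := by simp [ht]
  have htN : t N = 2 * Real.pi := by simp only [ht]; field_simp
  set c : ℕ → ℂ := fun j => X (circleMap 0 1 (t j)) with hc
  have hclose : ∀ ρ : ℝ, 1 / 2 ≤ ρ → 1 - δ < ρ → ρ ≤ 1 → ∀ j < N, ∀ x ∈ Icc (t j) (t (j + 1)),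
      ‖X (circleMap 0 ρ x) - c j‖ ≤ η := by
    intro ρ hρ1 hρ2 hρ3 j hj x hx
    have hj0 : 0 ≤ t j := ht0 ▸ htm (Nat.zero_le j)
    have hj1 : t (j + 1) ≤ 2 * Real.pi := htN ▸ htm hj
    rw [← dist_eq_norm]
    refine (hδ' (ρ, x) ⟨⟨hρ1, hρ3⟩, hj0.trans hx.1, hx.2.trans hj1⟩ (1, t j)
      ⟨⟨by norm_num, le_rfl⟩, hj0, (htm (Nat.le_succ j)).trans hj1⟩ ?_).le
    rw [Prod.dist_eq, max_lt_iff, Real.dist_eq, Real.dist_eq]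
    dsimp only
    rw [abs_of_nonpos (by linarith), abs_of_nonneg (by linarith [hx.1])]
    have : t (j + 1) = t j + 2 * Real.pi / N := by simp only [ht]; push_cast; ring
    constructor <;> linarith [hx.2]
  have hh0 : h 0 = 0 := by rw [← D.arg_zero, hhτ]; exact D.arg_zero.symm
  have hbdry := norm_integral_mul_deriv_sub_sum_le (N := N) (c := c) (ε := η)
    (t := fun j => h (t j)) (X := fun s => X (circleMap 0 1 (τ s))) D.hasDerivAt D.continuous_deriv
    ((hXc 1 one_pos le_rfl).comp D.continuous_arg) (hmono.monotone.comp htm) (by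
      intro j hj x hx
      refine hclose 1 (by norm_num) (by linarith) le_rfl j hj (τ x) ⟨?_, ?_⟩
      · rw [← hτh (t j)]; exact D.strictMono.monotone hx.1
      · rw [← hτh (t (j + 1))]; exact D.strictMono.monotone hx.2)
  have hh2 : h (2 * Real.pi) = 2 * Real.pi := by rw [← zero_add (2 * Real.pi), hadd, hh0]
  rw [ht0, htN, hh0, hh2, ← hV] at hbdry
  have hsumlim : Tendsto (fun ρ : ℝ => ∑ j ∈ Finset.range N,
      c j * (Ψ (circleMap 0 ρ (t (j + 1))) / circleMap 0 ρ (t (j + 1))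
        - Ψ (circleMap 0 ρ (t j)) / circleMap 0 ρ (t j))) (𝓝[<] 1)
      (𝓝 (∑ j ∈ Finset.range N, c j * (f (h (t (j + 1))) - f (h (t j))))) := by
    have hone : ∀ x : ℝ, Tendsto (fun ρ : ℝ => Ψ (circleMap 0 ρ x) / circleMap 0 ρ x) (𝓝[<] 1)
        (𝓝 (f (h x))) := by
      intro x
      rw [D.boundary, hτh]
      have hcl : Tendsto (fun ρ : ℝ => circleMap 0 ρ x) (𝓝[<] 1)
          (𝓝[Metric.closedBall 0 1] (circleMap 0 1 x)) := by
        refine tendsto_nhdsWithin_iff.2 ⟨?_, ?_⟩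
        · have : Continuous fun ρ : ℝ => circleMap 0 ρ x := by
            simp only [circleMap_zero]; fun_prop
          exact (this.tendsto 1).mono_left nhdsWithin_le_nhds
        · filter_upwards [Ioo_mem_nhdsLT (zero_lt_one' ℝ)] with ρ hρ
          simp [abs_of_pos hρ.1, hρ.2.le]
      have hΨ := D.diffContOnCl.2
      rw [closure_ball _ one_ne_zero] at hΨ
      refine ((hΨ _ (by simp)).tendsto.comp hcl).div (hcl.mono_right nhdsWithin_le_nhds)
        (circleMap_ne_center one_ne_zero)
    exact tendsto_finsetSum _ fun j _ => ((hone _).sub (hone _)).const_mul _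
  filter_upwards [Metric.tendsto_nhds.1 hsumlim η hη0,
    Ioo_mem_nhdsLT (show max (1 / 2) (1 - δ) < (1 : ℝ) from max_lt (by norm_num) (by linarith))]
    with ρ hρs hρ
  have hρ1 : 1 / 2 < ρ := (le_max_left _ _).trans_lt hρ.1
  have hρ2 : 1 - δ < ρ := (le_max_right _ _).trans_lt hρ.1
  have hρ0 : 0 < ρ := by linarith
  have hin := norm_integral_mul_deriv_sub_sum_le (N := N) (c := c) (ε := η)
    (X := fun θ => X (circleMap 0 ρ θ))
    (D.hasDerivAt_div_circleMap hρ0 hρ.2) (D.continuous_deriv_circleMap hρ0 hρ.2)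
    (hXc ρ hρ0 hρ.2.le) htm (hclose ρ hρ1.le hρ2 hρ.2.le)
  rw [ht0, htN] at hin
  have hlen := D.integral_norm_deriv_circleMap_le hρ0 hρ.2
  have hinv : ρ⁻¹ ≤ 2 := by rw [inv_le_comm₀ hρ0 two_pos]; linarith
  have hlen' := hlen.trans (mul_le_mul_of_nonneg_right hinv hV0)
  rw [dist_eq_norm] at hρs ⊢
  set A := ∫ θ in 0..2 * Real.pi, X (circleMap 0 ρ θ) *
      (-Complex.I * (Ψ (circleMap 0 ρ θ) - circleMap 0 ρ θ * deriv Ψ (circleMap 0 ρ θ))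
        / circleMap 0 ρ θ) with hA
  set B := ∫ s in 0..2 * Real.pi, X (circleMap 0 1 (τ s)) * f' s with hB
  have hin' := hin.trans (mul_le_mul_of_nonneg_left hlen' hη0.le)
  have hη2 : η * (3 * V + 1) = ε / 2 := by rw [hη]; field_simp
  have h3 := norm_add₃_le (a := A - ∑ j ∈ Finset.range N, c j *
    (Ψ (circleMap 0 ρ (t (j + 1))) / circleMap 0 ρ (t (j + 1))
        - Ψ (circleMap 0 ρ (t j)) / circleMap 0 ρ (t j)))
    (b := (∑ j ∈ Finset.range N, c j *
      (Ψ (circleMap 0 ρ (t (j + 1))) / circleMap 0 ρ (t (j + 1))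
        - Ψ (circleMap 0 ρ (t j)) / circleMap 0 ρ (t j))) -
      ∑ j ∈ Finset.range N, c j * (f (h (t (j + 1))) - f (h (t j))))
    (c := (∑ j ∈ Finset.range N, c j * (f (h (t (j + 1))) - f (h (t j)))) - B)
  rw [sub_add_sub_cancel, sub_add_sub_cancel] at h3
  rw [norm_sub_rev B] at hbdry
  rw [← hV] at hin'
  linarith

end DiskParam

lemma circleMap_one_eq_iff {a b : ℝ} :
    circleMap 0 1 a = circleMap 0 1 b ↔ ∃ n : ℤ, a = b + n * (2 * Real.pi) := by
  rw [circleMap_eq_circleMap_iff _ one_ne_zero]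
  refine exists_congr fun n => ?_
  rw [show (b * Complex.I + n * (2 * Real.pi * Complex.I) : ℂ)
    = ((b + n * (2 * Real.pi) : ℝ) : ℂ) * Complex.I by push_cast; ring,
    mul_left_inj' Complex.I_ne_zero, Complex.ofReal_inj]

lemma exists_continuous_circleMap_eq {q : ℝ → ℂ} (hq : Continuous q) (h1 : ∀ s, ‖q s‖ = 1)
    (h0 : q 0 = 1) : ∃ τ : ℝ → ℝ, Continuous τ ∧ τ 0 = 0 ∧ ∀ s, circleMap 0 1 (τ s) = q s := by
  let q' : C(ℝ, Circle) := ⟨fun s => ⟨q s, mem_sphere_zero_iff_norm.2 (h1 s)⟩,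
    hq.subtype_mk _⟩
  obtain ⟨τ, ⟨hτ0, hτ⟩, -⟩ := Circle.isCoveringMap_exp.existsUnique_continuousMap_lifts q' 0 0 (by
    ext
    simp only [Circle.exp_zero, Circle.coe_one]
    exact h0.symm)
  refine ⟨τ, τ.continuous, hτ0, fun s => ?_⟩
  have := congrArg (fun z : Circle => (z : ℂ)) (congrFun hτ s)
  rw [circleMap_zero, Complex.ofReal_one, one_mul, ← Circle.coe_exp]
  exact this

/-- A continuous argument of an injective parametrization of the unit circle is strictly monotone
and increases or decreases by exactly `2π` over a period. -/
lemma strictMono_or_strictAnti_arg {τ : ℝ → ℝ} (hτ : Continuous τ)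
    (h : ∀ s t, circleMap 0 1 (τ s) = circleMap 0 1 (τ t) ↔ ∃ n : ℤ, t - s = n * (2 * Real.pi)) :
    (StrictMono τ ∧ ∀ s, τ (s + 2 * Real.pi) = τ s + 2 * Real.pi) ∨
      (StrictAnti τ ∧ ∀ s, τ (s + 2 * Real.pi) = τ s - 2 * Real.pi) := by
  have hpi := Real.pi_pos
  have hk : ∀ s, ∃ k : ℤ, τ (s + 2 * Real.pi) = τ s + k * (2 * Real.pi) := fun s =>
    circleMap_one_eq_iff.1 ((h _ _).2 ⟨-1, by push_cast; ring⟩)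
  choose k hk using hk
  have hkc : ∀ s, k s = k 0 := by
    have hc : Continuous fun s => (k s : ℝ) := by
      have : (fun s => (k s : ℝ)) = fun s => (τ (s + 2 * Real.pi) - τ s) / (2 * Real.pi) := by
        ext s; rw [hk]; field_simp; ring
      rw [this]; fun_prop
    have hc' : Continuous k := Int.isClosedEmbedding_coe_real.isInducing.continuous_iff.2 hc
    intro s
    exact PreconnectedSpace.constant inferInstance hc'
  set m := k 0 with hm
  have hper : ∀ s, τ (s + 2 * Real.pi) = τ s + m * (2 * Real.pi) := fun s => by rw [hk, hkc]
  have hm0 : m ≠ 0 := by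
    intro h0
    rw [h0] at hper
    simp only [Int.cast_zero, zero_mul, add_zero] at hper
    have hg : Continuous fun s => τ (s + Real.pi) - τ s := by fun_prop
    have hsum : (fun s => τ (s + Real.pi) - τ s) 0 = -(fun s => τ (s + Real.pi) - τ s) Real.pi := by
      have := hper 0
      simp only [zero_add, ← two_mul] at this ⊢
      rw [this]; ring
    obtain ⟨s, hs⟩ : (0 : ℝ) ∈ range fun s => τ (s + Real.pi) - τ s := by
      rcases le_total 0 ((fun s => τ (s + Real.pi) - τ s) 0) with h' | h'
      · exact mem_range_of_exists_le_of_exists_ge hg ⟨Real.pi, by linarith⟩ ⟨0, h'⟩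
      · exact mem_range_of_exists_le_of_exists_ge hg ⟨0, h'⟩ ⟨Real.pi, by linarith⟩
    simp only at hs
    obtain ⟨n, hn⟩ := (h s (s + Real.pi)).1 (by rw [sub_eq_zero.1 hs])
    have : (2 * n : ℤ) = (1 : ℤ) := by
      have : ((2 * n : ℤ) : ℝ) * Real.pi = ((1 : ℤ) : ℝ) * Real.pi := by push_cast; linarith
      exact_mod_cast mul_right_cancel₀ hpi.ne' this
    omega
  have hperN : ∀ (n : ℕ) s, τ (s + n * (2 * Real.pi)) = τ s + n * (m * (2 * Real.pi)) := by
    intro n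
    induction n with
    | zero => simp
    | succ n ih =>
      intro s
      rw [show s + (n + 1 : ℕ) * (2 * Real.pi) = (s + n * (2 * Real.pi)) + 2 * Real.pi by
        push_cast; ring, hper, ih]
      push_cast; ring
  have hinj : Function.Injective τ := by
    have key : ∀ s t, s < t → τ s ≠ τ t := by
      intro s t hst heq
      obtain ⟨n, hn⟩ := (h s t).1 (by rw [heq])
      have hn0 : 0 < n := by
        have : (0 : ℝ) < n * (2 * Real.pi) := by linarith
        exact_mod_cast pos_of_mul_pos_left this (by positivity)
      lift n to ℕ using hn0.le
      have := hperN n s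
      rw [show s + n * (2 * Real.pi) = t by push_cast at hn; linarith, ← heq] at this
      have h0 : (n : ℝ) * (m * (2 * Real.pi)) = 0 := by linarith
      have hn' : (n : ℝ) ≠ 0 := by exact_mod_cast hn0.ne'
      have hm' : (m : ℝ) ≠ 0 := by exact_mod_cast hm0
      simp [hn', hm', hpi.ne'] at h0
    intro s t hst
    by_contra hne
    rcases lt_or_gt_of_ne hne with h' | h'
    · exact key _ _ h' hst
    · exact key _ _ h' hst.symm
  have hmid : ∀ j : ℤ, τ 0 + j * (2 * Real.pi) ∉ τ '' Ioo 0 (2 * Real.pi) := by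
    rintro j ⟨x, hx, hxj⟩
    obtain ⟨n, hn⟩ := (h 0 x).1 (circleMap_one_eq_iff.2 ⟨-j, by rw [hxj]; push_cast; ring⟩)
    rw [sub_zero] at hn
    rw [hn] at hx
    have h1 : (0 : ℝ) < n := pos_of_mul_pos_left hx.1 (by positivity)
    have h2 : (n : ℝ) < 1 := by
      by_contra hc
      nlinarith [hx.2, not_lt.1 hc]
    have h1' : 0 < n := by exact_mod_cast h1
    have h2' : n < 1 := by exact_mod_cast h2
    omega
  have h2pi : (0 : ℝ) ≤ 2 * Real.pi := by positivity
  have hend := hper 0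
  rw [zero_add] at hend
  rcases hτ.strictMono_of_inj hinj with hmono | hanti
  · left
    have hmpos : 0 < m := by
      have := hmono Real.two_pi_pos
      rw [hend] at this
      have : (0 : ℝ) < m * (2 * Real.pi) := by linarith
      exact_mod_cast pos_of_mul_pos_left this h2pi
    have hm1 : m = 1 := by
      by_contra hne
      have h2 : (2 : ℝ) ≤ m := by exact_mod_cast (by omega : (2 : ℤ) ≤ m)
      refine hmid 1 (intermediate_value_Ioo h2pi hτ.continuousOn ⟨?_, ?_⟩)
      · push_cast; linarith
      · rw [hend]; push_cast; nlinarith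
    exact ⟨hmono, fun s => by rw [hper, hm1]; simp⟩
  · right
    have hmneg : m < 0 := by
      have := hanti Real.two_pi_pos
      rw [hend] at this
      have : (0 : ℝ) < -m * (2 * Real.pi) := by linarith
      have : (0 : ℝ) < -m := pos_of_mul_pos_left this h2pi
      exact_mod_cast neg_pos.1 this
    have hm1 : m = -1 := by
      by_contra hne
      have h2 : (m : ℝ) ≤ -2 := by exact_mod_cast (by omega : m ≤ (-2 : ℤ))
      refine hmid (-1) (intermediate_value_Ioo' h2pi hτ.continuousOn ⟨?_, ?_⟩)
      · rw [hend]; push_cast; nlinarith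
      · push_cast; linarith
    exact ⟨hanti, fun s => by rw [hper, hm1]; push_cast; ring⟩

lemma connectedComponentIn_subset_exteriorDomain {Γ : Set ℂ} {z : ℂ}
    (hz : z ∈ exteriorDomain Γ) : connectedComponentIn Γᶜ z ⊆ exteriorDomain Γ := fun y hy =>
  ⟨connectedComponentIn_subset _ _ hy, by rw [← connectedComponentIn_eq hy]; exact hz.2⟩

lemma isOpen_exteriorDomain {Γ : Set ℂ} (hΓ : IsClosed Γ) : IsOpen (exteriorDomain Γ) :=
  isOpen_iff_mem_nhds.2 fun _ hz => mem_of_superset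
    (hΓ.isOpen_compl.connectedComponentIn.mem_nhds (mem_connectedComponentIn hz.1))
    (connectedComponentIn_subset_exteriorDomain hz)

lemma isClosed_exteriorDomain_union {Γ : Set ℂ} (hΓ : IsClosed Γ) :
    IsClosed (exteriorDomain Γ ∪ Γ) := by
  rw [← isOpen_compl_iff, isOpen_iff_mem_nhds]
  intro z hz
  have hzΓ : z ∈ Γᶜ := fun h => hz (Or.inr h)
  refine mem_of_superset
    (hΓ.isOpen_compl.connectedComponentIn.mem_nhds (mem_connectedComponentIn hzΓ)) fun y hy => ?_
  rintro (h | h)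
  · exact hz (Or.inl ⟨hzΓ, by rw [connectedComponentIn_eq hy]; exact h.2⟩)
  · exact connectedComponentIn_subset _ _ hy h

section Exterior

variable {Γ : Set ℂ} {φ ψ φb : ℂ → ℂ} {c : ℝ}

lemma tendsto_exteriorParam (hΓ : IsClosed Γ) (hψ : IsExteriorParam Γ φ ψ)
    (hφb_eq : ∀ z ∈ exteriorDomain Γ, φb z = φ z)
    (hφb_cont : ContinuousOn φb (exteriorDomain Γ ∪ Γ)) :
    Tendsto ψ (Bornology.cobounded ℂ) (Bornology.cobounded ℂ ⊓ 𝓟 (exteriorDomain Γ)) := by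
  have hlarge : ∀ r : ℝ, ∀ᶠ w in Bornology.cobounded ℂ, r < ‖w‖ := fun r => by
    simpa using (tendsto_norm_cobounded_atTop (E := ℂ)).eventually (eventually_gt_atTop r)
  refine tendsto_inf.2 ⟨?_, tendsto_principal.2 ((hlarge 1).mono fun w hw => (hψ.inv w hw).1)⟩
  rw [← tendsto_norm_atTop_iff_cobounded, tendsto_atTop]
  intro R
  have hK : IsCompact ((exteriorDomain Γ ∪ Γ) ∩ Metric.closedBall 0 R) :=
    (isCompact_closedBall _ _).inter_left (isClosed_exteriorDomain_union hΓ)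
  obtain ⟨M, hM⟩ := hK.exists_bound_of_continuousOn (hφb_cont.mono inter_subset_left)
  filter_upwards [hlarge M, hlarge 1] with w hw hw1
  by_contra hlt
  have h1 := hψ.inv w hw1
  have := hM (ψ w) ⟨Or.inl h1.1, by simpa using (not_le.1 hlt).le⟩
  rw [hφb_eq _ h1.1, h1.2] at this
  linarith

lemma tendsto_exteriorParam_div (hΓ : IsClosed Γ) (hφ : IsExteriorMap Γ φ c)
    (hψ : IsExteriorParam Γ φ ψ) (hφb_eq : ∀ z ∈ exteriorDomain Γ, φb z = φ z)
    (hφb_cont : ContinuousOn φb (exteriorDomain Γ ∪ Γ)) :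
    Tendsto (fun w => ψ w / w) (Bornology.cobounded ℂ) (𝓝 (c : ℂ)) := by
  have h := hφ.tendsto.comp (tendsto_exteriorParam hΓ hψ hφb_eq hφb_cont)
  have h2 := h.inv₀ (inv_ne_zero (by exact_mod_cast hφ.cpos.ne'))
  rw [inv_inv] at h2
  refine h2.congr' ?_
  have hlarge : ∀ᶠ w in Bornology.cobounded ℂ, 1 < ‖w‖ := by
    simpa using (tendsto_norm_cobounded_atTop (E := ℂ)).eventually (eventually_gt_atTop 1)
  filter_upwards [hlarge] with w hw
  simp only [Function.comp, (hψ.inv w hw).2, inv_div]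

lemma isOpen_one_lt_norm : IsOpen {w : ℂ | 1 < ‖w‖} := isOpen_lt continuous_const continuous_norm

lemma differentiableAt_exteriorParam (hΓ : IsClosed Γ) (hφ : IsExteriorMap Γ φ c)
    (hψ : IsExteriorParam Γ φ ψ) {w : ℂ} (hw : 1 < ‖w‖) : DifferentiableAt ℂ ψ w := by
  have hΩ := isOpen_exteriorDomain hΓ
  have hcont : ∀ w, 1 < ‖w‖ → ContinuousAt ψ w := fun w hw =>
    hψ.cont.continuousAt
      (mem_of_superset (isOpen_one_lt_norm.mem_nhds hw) fun x (h : 1 < ‖x‖) => h.le)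
  have hmem := hψ.inv w hw
  have han : AnalyticAt ℂ (deriv φ) (ψ w) :=
    (hφ.diff.deriv hΩ).analyticAt (hΩ.mem_nhds hmem.1)
  have hne : ∀ᶠ z in 𝓝[≠] (ψ w), deriv φ z ≠ 0 := by
    refine han.eventually_eq_zero_or_eventually_ne_zero.resolve_left fun h0 => ?_
    obtain ⟨r, hr, hball⟩ := Metric.eventually_nhds_iff_ball.1
      (h0.and (hΩ.mem_nhds hmem.1))
    have hz' : ψ w + (r / 2 : ℝ) ∈ Metric.ball (ψ w) r := by
      simpa [abs_of_pos hr] using hr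
    have := Metric.isOpen_ball.is_const_of_deriv_eq_zero
      (convex_ball (ψ w) r).isPreconnected (hφ.diff.mono fun z hz => (hball z hz).2)
      (fun z hz => (hball z hz).1) (Metric.mem_ball_self hr) hz'
    have := hφ.bij.injOn hmem.1 (hball _ hz').2 this
    simp [hr.ne'] at this
  refine (Complex.analyticAt_of_differentiable_on_punctured_nhds_of_continuousAt ?_
    (hcont w hw)).differentiableAt
  have htend : Tendsto ψ (𝓝[≠] w) (𝓝[≠] (ψ w)) := by
    refine tendsto_nhdsWithin_iff.2 ⟨(hcont w hw).tendsto.mono_left nhdsWithin_le_nhds, ?_⟩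
    filter_upwards [self_mem_nhdsWithin,
      mem_nhdsWithin_of_mem_nhds (isOpen_one_lt_norm.mem_nhds hw)] with v hv hv1 heq
    exact hv (hψ.inj (le_of_lt hv1) (le_of_lt hw) heq)
  filter_upwards [htend.eventually hne,
    mem_nhdsWithin_of_mem_nhds (isOpen_one_lt_norm.mem_nhds hw)] with v hv hv1
  have hv' := hψ.inv v hv1
  refine (HasDerivAt.of_local_left_inverse (hcont v hv1)
    (hφ.diff.differentiableAt (hΩ.mem_nhds hv'.1)).hasDerivAt hv ?_).differentiableAt
  filter_upwards [isOpen_one_lt_norm.mem_nhds hv1] with y hy using (hψ.inv y hy).2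

lemma deriv_exteriorParam_ne_zero (hΓ : IsClosed Γ) (hφ : IsExteriorMap Γ φ c)
    (hψ : IsExteriorParam Γ φ ψ) {w : ℂ} (hw : 1 < ‖w‖) : deriv ψ w ≠ 0 := by
  have hmem := hψ.inv w hw
  have h := (hφ.diff.differentiableAt
    ((isOpen_exteriorDomain hΓ).mem_nhds hmem.1)).hasDerivAt.comp w
    (differentiableAt_exteriorParam hΓ hφ hψ hw).hasDerivAt
  have h2 : HasDerivAt (φ ∘ ψ) 1 w := (hasDerivAt_id w).congr_of_eventuallyEq (by
    filter_upwards [isOpen_one_lt_norm.mem_nhds hw] with y hy using (hψ.inv y hy).2)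
  intro h0
  rw [h0, mul_zero] at h
  exact zero_ne_one (h.unique h2)

/-- The exterior parametrization in the coordinate `u = 1 / w`, with its pole at `u = 0`
divided out. -/
def diskParamOf (ψ : ℂ → ℂ) (c : ℝ) (u : ℂ) : ℂ := if u = 0 then c else u * ψ u⁻¹

lemma diskParamOf_zero : diskParamOf ψ c 0 = c := if_pos rfl

lemma diskParamOf_of_ne {u : ℂ} (hu : u ≠ 0) : diskParamOf ψ c u = u * ψ u⁻¹ := if_neg hu

lemma diskParamOf_div {u : ℂ} (hu : u ≠ 0) : diskParamOf ψ c u / u = ψ u⁻¹ := by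
  rw [diskParamOf_of_ne hu, mul_div_cancel_left₀ _ hu]

lemma one_lt_norm_inv {u : ℂ} (hu : u ∈ Metric.ball (0 : ℂ) 1) (h0 : u ≠ 0) : 1 < ‖u⁻¹‖ := by
  rw [norm_inv]
  exact (one_lt_inv₀ (norm_pos_iff.2 h0)).2 (by simpa using hu)

lemma hasDerivAt_diskParamOf (hΓ : IsClosed Γ) (hφ : IsExteriorMap Γ φ c)
    (hψ : IsExteriorParam Γ φ ψ) {u : ℂ} (hu : u ∈ Metric.ball (0 : ℂ) 1) (h0 : u ≠ 0) :
    HasDerivAt (diskParamOf ψ c) (ψ u⁻¹ - u⁻¹ * deriv ψ u⁻¹) u := by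
  have h := (hasDerivAt_id u).mul
    ((differentiableAt_exteriorParam hΓ hφ hψ (one_lt_norm_inv hu h0)).hasDerivAt.comp u
      (hasDerivAt_inv h0))
  refine HasDerivAt.congr_of_eventuallyEq ?_ (f := fun v => v * ψ v⁻¹) ?_
  · convert! h using 1
    simp only [id, Function.comp]
    field_simp
    ring
  · filter_upwards [isOpen_ne.mem_nhds h0] with v hv using diskParamOf_of_ne hv

lemma diffContOnCl_diskParamOf (hΓ : IsClosed Γ) (hφ : IsExteriorMap Γ φ c)
    (hψ : IsExteriorParam Γ φ ψ) (hφb_eq : ∀ z ∈ exteriorDomain Γ, φb z = φ z)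
    (hφb_cont : ContinuousOn φb (exteriorDomain Γ ∪ Γ)) :
    DiffContOnCl ℂ (diskParamOf ψ c) (Metric.ball 0 1) := by
  have hc0 : ContinuousAt (diskParamOf ψ c) 0 := by
    rw [continuousAt_iff_punctured_nhds, diskParamOf_zero]
    refine ((tendsto_exteriorParam_div hΓ hφ hψ hφb_eq hφb_cont).comp
      tendsto_inv₀_nhdsNE_zero).congr' ?_
    filter_upwards [self_mem_nhdsWithin] with u hu
    rw [diskParamOf_of_ne hu]
    simp [div_eq_mul_inv, mul_comm]
  have hd : DifferentiableOn ℂ (diskParamOf ψ c) (Metric.ball 0 1) := by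
    rw [← Complex.differentiableOn_compl_singleton_and_continuousAt_iff
      (Metric.ball_mem_nhds (0 : ℂ) one_pos)]
    exact ⟨fun u hu => (hasDerivAt_diskParamOf hΓ hφ hψ hu.1
      hu.2).differentiableAt.differentiableWithinAt, hc0⟩
  refine ⟨hd, ?_⟩
  rw [closure_ball _ one_ne_zero]
  intro u hu
  by_cases h0 : u = 0
  · rw [h0]; exact hc0.continuousWithinAt
  have h1 : ContinuousWithinAt (fun v => v * ψ v⁻¹) (Metric.closedBall 0 1 \ {0}) u := by
    refine continuousWithinAt_id.mul ((hψ.cont u⁻¹ ?_).comp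
      (continuousAt_inv₀ h0).continuousWithinAt ?_)
    · rw [mem_ofPred_eq, norm_inv]
      exact (one_le_inv₀ (norm_pos_iff.2 h0)).2 (by simpa using hu)
    · intro v hv
      rw [mem_ofPred_eq, norm_inv]
      exact (one_le_inv₀ (norm_pos_iff.2 hv.2)).2 (by simpa using hv.1)
  have h2 := h1.congr (fun v hv => diskParamOf_of_ne (ψ := ψ) (c := c) hv.2) (diskParamOf_of_ne h0)
  refine h2.mono_of_mem_nhdsWithin ?_
  exact inter_mem self_mem_nhdsWithin (mem_nhdsWithin_of_mem_nhds (isOpen_ne.mem_nhds h0))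

lemma diskParamOf_fac_ne_zero (hΓ : IsClosed Γ) (hφ : IsExteriorMap Γ φ c)
    (hψ : IsExteriorParam Γ φ ψ) {u : ℂ} (hu : u ∈ Metric.ball (0 : ℂ) 1) :
    diskParamOf ψ c u - u * deriv (diskParamOf ψ c) u ≠ 0 := by
  by_cases h0 : u = 0
  · rw [h0, diskParamOf_zero, zero_mul, sub_zero]
    exact_mod_cast hφ.cpos.ne'
  · rw [(hasDerivAt_diskParamOf hΓ hφ hψ hu h0).deriv, diskParamOf_of_ne h0, ← mul_sub,
      sub_sub_cancel, mul_inv_cancel_left₀ h0]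
    exact deriv_exteriorParam_ne_zero hΓ hφ hψ (one_lt_norm_inv hu h0)

end Exterior

/-- A disk parametrization of a Jordan curve `f` whose nonvanishing derivative has the
Dini modulus of continuity `ω`. -/
structure DiniDiskParam (Ψ : ℂ → ℂ) (f f' : ℝ → ℂ) (τ ω : ℝ → ℝ) : Prop
    extends DiskParam Ψ f f' τ where
  inj : ∀ s t, f s = f t → ∃ n : ℤ, t - s = n * (2 * Real.pi)
  deriv_ne_zero : ∀ s, f' s ≠ 0
  monotone_modulus : Monotone ω
  modulus_nonneg : ∀ t, 0 ≤ ω t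
  norm_sub_le : ∀ s t, ‖f' s - f' t‖ ≤ ω |s - t|
  dini : IntegrableOn (fun t => ω t / t) (Ioc (0 : ℝ) 1)

lemma modContGlobal_nonneg (g : ℝ → ℂ) (t : ℝ) : 0 ≤ modContGlobal g t :=
  Real.sSup_nonneg (by rintro _ ⟨_, _, _, rfl⟩; exact norm_nonneg _)

lemma bddAbove_modContGlobal {g : ℝ → ℂ} {M : ℝ} (hg : ∀ s, ‖g s‖ ≤ M) (t : ℝ) :
    BddAbove {d : ℝ | ∃ s₁ s₂ : ℝ, |s₁ - s₂| ≤ t ∧ d = ‖g s₁ - g s₂‖} :=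
  ⟨M + M, by rintro _ ⟨s₁, s₂, -, rfl⟩; exact (norm_sub_le _ _).trans (add_le_add (hg _) (hg _))⟩

lemma norm_sub_le_modContGlobal {g : ℝ → ℂ} {M : ℝ} (hg : ∀ s, ‖g s‖ ≤ M) (s t : ℝ) :
    ‖g s - g t‖ ≤ modContGlobal g |s - t| :=
  le_csSup (bddAbove_modContGlobal hg _) ⟨s, t, le_rfl, rfl⟩

lemma monotone_modContGlobal {g : ℝ → ℂ} {M : ℝ} (hg : ∀ s, ‖g s‖ ≤ M) :
    Monotone (modContGlobal g) := by
  intro a b hab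
  rcases lt_or_ge a 0 with ha | ha
  · refine le_trans (le_of_eq ?_) (modContGlobal_nonneg g b)
    have : {d : ℝ | ∃ s₁ s₂ : ℝ, |s₁ - s₂| ≤ a ∧ d = ‖g s₁ - g s₂‖} = ∅ := by
      ext d
      simp only [mem_ofPred_eq, mem_empty_iff_false, iff_false]
      rintro ⟨s₁, s₂, h, -⟩
      linarith [abs_nonneg (s₁ - s₂)]
    rw [modContGlobal, this, Real.sSup_empty]
  · refine csSup_le_csSup (bddAbove_modContGlobal hg b) ⟨0, 0, 0, by simpa using ha, by simp⟩ ?_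
    rintro d ⟨s₁, s₂, h, rfl⟩
    exact ⟨s₁, s₂, h.trans hab, rfl⟩

lemma exists_diniDiskParam {Γ : Set ℂ} {φ ψ φb : ℂ → ℂ} {c : ℝ} (hΓ : IsDiniSmoothJordanCurve Γ)
    (hφ : IsExteriorMap Γ φ c) (hψ : IsExteriorParam Γ φ ψ)
    (hφb_eq : ∀ z ∈ exteriorDomain Γ, φb z = φ z)
    (hφb_cont : ContinuousOn φb (exteriorDomain Γ ∪ Γ))
    (hφb_circle : ∀ w : ℂ, ‖w‖ = 1 → φb (ψ w) = w) :
    IsCompact Γ ∧ ∃ (f f' : ℝ → ℂ) (τ ω : ℝ → ℝ), DiniDiskParam (diskParamOf ψ c) f f' τ ω ∧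
      range f = Γ ∧ ∀ s, φb (f s) * circleMap 0 1 (τ s) = 1 := by
  obtain ⟨g, g', hg, hgper, hginj, hgd, hgc', hg0, hdini, rfl⟩ := hΓ
  have hcomp : IsCompact (range g) := hgper.compact_of_continuous Real.two_pi_pos.ne' hg
  refine ⟨hcomp, ?_⟩
  have hφb : ∀ s, ‖φb (g s)‖ = 1 ∧ ψ (φb (g s)) = g s := by
    intro s
    obtain ⟨w, hw, hws⟩ := hψ.boundary_surj (g s) (mem_range_self s)
    rw [← hws, hφb_circle w hw]
    exact ⟨hw, rfl⟩
  have hφbne : ∀ s, φb (g s) ≠ 0 := fun s => norm_ne_zero_iff.1 (by simp [(hφb s).1])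
  obtain ⟨t₀, ht₀⟩ : ψ 1 ∈ range g := hψ.boundary 1 norm_one
  have hgperZ : ∀ (n : ℤ) s, g (s + n * (2 * Real.pi)) = g s := fun n s => hgper.int_mul n s
  have hgper' : Function.Periodic g' (2 * Real.pi) := fun s => by
    have h := (hgd (s + 2 * Real.pi)).comp_add_const s (2 * Real.pi)
    have h2 : (fun x => g (x + 2 * Real.pi)) = g := funext hgper
    rw [h2] at h
    exact h.unique (hgd s)
  obtain ⟨M, hM⟩ : ∃ M, ∀ s, ‖g' s‖ ≤ M := by
    obtain ⟨M, hM⟩ :=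
      (hgper'.compact_of_continuous Real.two_pi_pos.ne' hgc').isBounded.exists_norm_le
    exact ⟨M, fun s => hM _ (mem_range_self s)⟩
  have hqc : Continuous fun s => (φb (g (s + t₀)))⁻¹ :=
    ((hφb_cont.mono subset_union_right).comp_continuous
      (hg.comp (continuous_id.add continuous_const)) fun s => mem_range_self _).inv₀
      fun s => hφbne _
  obtain ⟨τ, hτc, hτ0, hτ⟩ := exists_continuous_circleMap_eq hqc
    (fun s => by rw [norm_inv, (hφb _).1, inv_one])
    (by rw [zero_add, ht₀, hφb_circle 1 norm_one, inv_one])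
  have hτiff : ∀ s t, circleMap 0 1 (τ s) = circleMap 0 1 (τ t) ↔
      ∃ n : ℤ, t - s = n * (2 * Real.pi) := by
    intro s t
    rw [hτ, hτ, inv_inj]
    constructor
    · intro h
      obtain ⟨n, hn⟩ := hginj (s + t₀) (t + t₀) (by rw [← (hφb _).2, h, (hφb _).2])
      exact ⟨n, by linarith⟩
    · rintro ⟨n, hn⟩
      rw [show t + t₀ = (s + t₀) + n * (2 * Real.pi) by linarith, hgperZ]
  have hbd : ∀ s, g (s + t₀) =
      diskParamOf ψ c (circleMap 0 1 (τ s)) / circleMap 0 1 (τ s) := fun s => by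
    rw [diskParamOf_div (circleMap_ne_center one_ne_zero), hτ, inv_inv, (hφb _).2]
  have hcl := hcomp.isClosed
  have hone : ∀ s, φb (g (s + t₀)) * circleMap 0 1 (τ s) = 1 := fun s => by
    rw [hτ, mul_inv_cancel₀ (hφbne _)]
  rcases strictMono_or_strictAnti_arg hτc hτiff with ⟨hmono, hadd⟩ | ⟨hanti, hadd⟩
  · refine ⟨fun s => g (s + t₀), fun s => g' (s + t₀), τ, modContGlobal g',
      ⟨⟨diffContOnCl_diskParamOf hcl hφ hψ hφb_eq hφb_cont,
        fun u hu => diskParamOf_fac_ne_zero hcl hφ hψ hu, fun s => (hgd _).comp_add_const s t₀,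
        by fun_prop, hmono, hτc, hτ0, hadd, hbd⟩, ?_, fun s => hg0 _, monotone_modContGlobal hM,
        modContGlobal_nonneg g', ?_, hdini⟩, ?_, hone⟩
    · intro s t h
      obtain ⟨n, hn⟩ := hginj _ _ h
      exact ⟨n, by linarith⟩
    · intro s t
      simpa using norm_sub_le_modContGlobal hM (s + t₀) (t + t₀)
    · ext z
      constructor
      · rintro ⟨s, rfl⟩; exact mem_range_self _
      · rintro ⟨s, rfl⟩; exact ⟨s - t₀, by simp⟩
  · refine ⟨fun s => g (-s + t₀), fun s => -g' (-s + t₀), fun s => τ (-s), modContGlobal g',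
      ⟨⟨diffContOnCl_diskParamOf hcl hφ hψ hφb_eq hφb_cont,
        fun u hu => diskParamOf_fac_ne_zero hcl hφ hψ hu, ?_,
        by fun_prop, fun s t h => hanti (neg_lt_neg h), by fun_prop, by simpa using hτ0, ?_,
        fun s => hbd (-s)⟩, ?_, fun s => neg_ne_zero.2 (hg0 _), monotone_modContGlobal hM,
        modContGlobal_nonneg g', ?_, hdini⟩, ?_, fun s => hone (-s)⟩
    · intro s
      have h1 : HasDerivAt (fun s : ℝ => -s + t₀) (-1) s := (hasDerivAt_neg s).add_const t₀
      simpa [Function.comp_def] using (hgd (-s + t₀)).scomp s h1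
    · intro s
      have := hadd (-(s + 2 * Real.pi))
      simp only [neg_add, neg_add_cancel_right] at this ⊢
      linarith
    · intro s t h
      obtain ⟨n, hn⟩ := hginj _ _ h
      exact ⟨-n, by push_cast; linarith⟩
    · intro s t
      have := norm_sub_le_modContGlobal hM (-t + t₀) (-s + t₀)
      rw [show -t + t₀ - (-s + t₀) = s - t by ring] at this
      rwa [neg_sub_neg]
    · ext z
      constructor
      · rintro ⟨s, rfl⟩; exact mem_range_self _
      · rintro ⟨s, rfl⟩; exact ⟨t₀ - s, by simp⟩

lemma exists_derivative_eq (R : Polynomial ℂ) : ∃ S : Polynomial ℂ, S.derivative = R := by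
  induction R using Polynomial.induction_on' with
  | add p q hp hq =>
    obtain ⟨S, rfl⟩ := hp
    obtain ⟨T, rfl⟩ := hq
    exact ⟨S + T, Polynomial.derivative_add⟩
  | monomial n a =>
    refine ⟨Polynomial.monomial (n + 1) (a / (n + 1)), ?_⟩
    have : (n + 1 : ℂ) ≠ 0 := by exact_mod_cast n.succ_ne_zero
    rw [Polynomial.derivative_monomial]
    simp [this]

namespace DiskParam

variable {Ψ : ℂ → ℂ} {f f' : ℝ → ℂ} {τ : ℝ → ℝ}

/-- `Q(u) / (Ψ(u) - z u)`, where `Q = Ψ - u Ψ'`. -/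
def kernelFun (Ψ : ℂ → ℂ) (z u : ℂ) : ℂ := (Ψ u - u * deriv Ψ u) / (Ψ u - z * u)

lemma differentiableOn_kernelFun (D : DiskParam Ψ f f' τ) {z : ℂ}
    (hz : ∀ u ∈ Metric.closedBall (0 : ℂ) 1, Ψ u - z * u ≠ 0) :
    DifferentiableOn ℂ (kernelFun Ψ z) (Metric.ball 0 1) :=
  D.differentiableOn_fac.div (D.diffContOnCl.1.sub ((differentiableOn_id).const_mul z))
    fun u hu => hz u (Metric.ball_subset_closedBall hu)

lemma kernelFun_zero {z : ℂ} (h : Ψ 0 ≠ 0) : kernelFun Ψ z 0 = 1 := by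
  simp [kernelFun, h]

lemma tendsto_integral_kernelFun (D : DiskParam Ψ f f' τ) {z : ℂ}
    (hz : ∀ u ∈ Metric.closedBall (0 : ℂ) 1, Ψ u - z * u ≠ 0) {g : ℂ → ℂ}
    (hg : ContinuousOn g (Metric.closedBall 0 1 \ {0})) :
    Tendsto (fun ρ : ℝ => -Complex.I * ∫ θ in 0..2 * Real.pi,
      g (circleMap 0 ρ θ) * kernelFun Ψ z (circleMap 0 ρ θ)) (𝓝[<] 1)
      (𝓝 (∫ s in 0..2 * Real.pi, g (circleMap 0 1 (τ s)) * (f' s / (f s - z)))) := by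
  have hne : ∀ u ∈ Metric.closedBall (0 : ℂ) 1 \ {0}, Ψ u / u - z ≠ 0 := fun u hu h => by
    have hu0 : u ≠ 0 := hu.2
    apply hz u hu.1
    rw [sub_eq_zero, div_eq_iff hu0] at h
    rw [h, sub_self]
  have hΨ := D.diffContOnCl.2
  rw [closure_ball _ one_ne_zero] at hΨ
  have hX : ContinuousOn (fun u => g u / (Ψ u / u - z)) (Metric.closedBall 0 1 \ {0}) :=
    hg.div (((hΨ.mono sdiff_subset).div continuousOn_id fun u hu => hu.2).sub continuousOn_const)
      hne
  have h := D.tendsto_integral_circleMap hX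
  refine (h.congr' ?_).trans_eq ?_
  · filter_upwards [Ioo_mem_nhdsLT (zero_lt_one' ℝ)] with ρ hρ
    rw [← intervalIntegral.integral_const_mul]
    refine intervalIntegral.integral_congr fun θ _ => ?_
    have h0 : circleMap 0 ρ θ ≠ 0 := circleMap_ne_center hρ.1.ne'
    have hm : circleMap 0 ρ θ ∈ Metric.closedBall (0 : ℂ) 1 := by
      simp [abs_of_pos hρ.1, hρ.2.le]
    have h1 := hne _ ⟨hm, h0⟩
    have h2 := hz _ hm
    have h3 : Ψ (circleMap 0 ρ θ) / circleMap 0 ρ θ - z =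
      (Ψ (circleMap 0 ρ θ) - z * circleMap 0 ρ θ) / circleMap 0 ρ θ := by field_simp
    simp only [kernelFun, h3]
    field_simp
  · congr 1
    refine intervalIntegral.integral_congr fun s _ => ?_
    rw [← D.boundary]
    ring

lemma integral_eq_of_kernelFun (D : DiskParam Ψ f f' τ) {z : ℂ}
    (hz : ∀ u ∈ Metric.closedBall (0 : ℂ) 1, Ψ u - z * u ≠ 0) {g : ℂ → ℂ}
    (hg : ContinuousOn g (Metric.closedBall 0 1 \ {0})) {a : ℂ}
    (ha : ∀ ρ : ℝ, 0 < ρ → ρ < 1 → ∫ θ in 0..2 * Real.pi,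
      g (circleMap 0 ρ θ) * kernelFun Ψ z (circleMap 0 ρ θ) = a) :
    ∫ s in 0..2 * Real.pi, g (circleMap 0 1 (τ s)) * (f' s / (f s - z)) = -Complex.I * a := by
  refine tendsto_nhds_unique (D.tendsto_integral_kernelFun hz hg)
    (tendsto_const_nhds.congr' ?_)
  filter_upwards [Ioo_mem_nhdsLT (zero_lt_one' ℝ)] with ρ hρ
  rw [ha ρ hρ.1 hρ.2]

lemma integral_pow_mul_cauchy (D : DiskParam Ψ f f' τ) {z : ℂ}
    (hz : ∀ u ∈ Metric.closedBall (0 : ℂ) 1, Ψ u - z * u ≠ 0) {n : ℕ} (hn : 1 ≤ n) :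
    ∫ s in 0..2 * Real.pi, circleMap 0 1 (τ s) ^ n * (f' s / (f s - z)) = 0 := by
  rw [D.integral_eq_of_kernelFun hz (g := fun u => u ^ n) (by fun_prop) (a := 0) (fun ρ h0 h1 =>
    integral_pow_mul_circleMap (D.differentiableOn_kernelFun hz) h0 h1 hn), mul_zero]

lemma integral_cauchy (D : DiskParam Ψ f f' τ) {z : ℂ}
    (hz : ∀ u ∈ Metric.closedBall (0 : ℂ) 1, Ψ u - z * u ≠ 0) :
    ∫ s in 0..2 * Real.pi, f' s / (f s - z) = -Complex.I * (2 * Real.pi) := by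
  have h0 : Ψ 0 ≠ 0 := by simpa using hz 0 (by simp)
  have := D.integral_eq_of_kernelFun hz (g := fun _ => 1) continuousOn_const (a := 2 * Real.pi)
    (fun ρ h0' h1 => by
      simp only [one_mul]
      rw [integral_circleMap_eq (D.differentiableOn_kernelFun hz) h0' h1, kernelFun_zero h0,
        mul_one])
  simpa using this

lemma integral_eval_mul_kernelFun (D : DiskParam Ψ f f' τ) {z : ℂ}
    (hz : ∀ u ∈ Metric.closedBall (0 : ℂ) 1, Ψ u - z * u ≠ 0) (F : Polynomial ℂ)
    {ρ : ℝ} (h0 : 0 < ρ) (h1 : ρ < 1) :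
    ∫ θ in 0..2 * Real.pi, F.eval (Ψ (circleMap 0 ρ θ) / circleMap 0 ρ θ) *
      kernelFun Ψ z (circleMap 0 ρ θ) = 2 * Real.pi * F.eval z := by
  have hu0 : ∀ θ, circleMap 0 ρ θ ≠ 0 := fun θ => circleMap_ne_center h0.ne'
  have hub : ∀ θ, circleMap 0 ρ θ ∈ Metric.ball (0 : ℂ) 1 := fun θ => by simp [abs_of_pos h0, h1]
  obtain ⟨R, hR⟩ : ∃ R : Polynomial ℂ,
      F = Polynomial.C (F.eval z) + R * (Polynomial.X - Polynomial.C z) := by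
    obtain ⟨R, hR⟩ := Polynomial.X_sub_C_dvd_sub_C_eval (p := F) (a := z)
    exact ⟨R, by rw [mul_comm, ← hR]; ring⟩
  obtain ⟨S, hS⟩ := exists_derivative_eq R
  have hΨ0 : Ψ 0 ≠ 0 := by simpa using hz 0 (by simp)
  have hH := D.differentiableOn_kernelFun hz
  have hHc : Continuous fun θ => kernelFun Ψ z (circleMap 0 ρ θ) :=
    hH.continuousOn.comp_continuous (continuous_circleMap 0 ρ) hub
  have hS' : ∀ θ, HasDerivAt (fun θ : ℝ => S.eval (Ψ (circleMap 0 ρ θ) / circleMap 0 ρ θ))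
      (R.eval (Ψ (circleMap 0 ρ θ) / circleMap 0 ρ θ) *
      (-Complex.I * (Ψ (circleMap 0 ρ θ) - circleMap 0 ρ θ * deriv Ψ (circleMap 0 ρ θ))
        / circleMap 0 ρ θ)) θ := fun θ => by
    rw [← hS]
    exact (S.hasDerivAt _).comp θ (D.hasDerivAt_div_circleMap h0 h1 θ)
  have hχc : Continuous fun θ => Ψ (circleMap 0 ρ θ) / circleMap 0 ρ θ :=
    continuous_iff_continuousAt.2 fun θ => (D.hasDerivAt_div_circleMap h0 h1 θ).continuousAt
  have hRc : Continuous fun θ => R.eval (Ψ (circleMap 0 ρ θ) / circleMap 0 ρ θ) :=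
    R.continuous.comp hχc
  have hzero := intervalIntegral.integral_eq_sub_of_hasDerivAt (a := 0) (b := 2 * Real.pi)
    (fun θ _ => hS' θ)
    ((hRc.mul (D.continuous_deriv_circleMap h0 h1)).intervalIntegrable _ _)
  have hper : circleMap 0 ρ (2 * Real.pi) = circleMap 0 ρ 0 := by
    simpa using periodic_circleMap 0 ρ 0
  rw [hper, sub_self] at hzero
  have hsplit : ∀ θ, F.eval (Ψ (circleMap 0 ρ θ) / circleMap 0 ρ θ) *
      kernelFun Ψ z (circleMap 0 ρ θ) = F.eval z * kernelFun Ψ z (circleMap 0 ρ θ) +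
      Complex.I * (R.eval (Ψ (circleMap 0 ρ θ) / circleMap 0 ρ θ) *
      (-Complex.I * (Ψ (circleMap 0 ρ θ) - circleMap 0 ρ θ * deriv Ψ (circleMap 0 ρ θ))
        / circleMap 0 ρ θ)) := fun θ => by
    conv_lhs => rw [hR]
    have h1 := hu0 θ
    have h2 := hz _ (Metric.ball_subset_closedBall (hub θ))
    simp only [Polynomial.eval_add, Polynomial.eval_C, Polynomial.eval_mul, Polynomial.eval_sub,
      Polynomial.eval_X, kernelFun]
    have h3 : Ψ (circleMap 0 ρ θ) / circleMap 0 ρ θ - z =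
      (Ψ (circleMap 0 ρ θ) - z * circleMap 0 ρ θ) / circleMap 0 ρ θ := by field_simp
    rw [h3]
    generalize Ψ (circleMap 0 ρ θ) - z * circleMap 0 ρ θ = E at h2 ⊢
    generalize Ψ (circleMap 0 ρ θ) - circleMap 0 ρ θ * deriv Ψ (circleMap 0 ρ θ) = Q
    generalize R.eval (Ψ (circleMap 0 ρ θ) / circleMap 0 ρ θ) = r
    generalize F.eval z = a
    field_simp
    rw [Complex.I_sq]
    ring
  simp_rw [hsplit]
  have hi := (hRc.fun_mul (D.continuous_deriv_circleMap h0 h1)).intervalIntegrable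
    (μ := volume) 0 (2 * Real.pi)
  rw [intervalIntegral.integral_add ((hHc.intervalIntegrable _ _).const_mul _) (hi.const_mul _),
    intervalIntegral.integral_const_mul, intervalIntegral.integral_const_mul, hzero,
    integral_circleMap_eq hH h0 h1, kernelFun_zero hΨ0]
  ring

lemma integral_inv_pow_mul_cauchy (D : DiskParam Ψ f f' τ) {z : ℂ}
    (hz : ∀ u ∈ Metric.closedBall (0 : ℂ) 1, Ψ u - z * u ≠ 0) {F : Polynomial ℂ} {n : ℕ}
    (hF : Tendsto (fun u => u⁻¹ ^ n - F.eval (Ψ u / u)) (𝓝[≠] 0) (𝓝 0)) :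
    ∫ s in 0..2 * Real.pi, (circleMap 0 1 (τ s))⁻¹ ^ n * (f' s / (f s - z))
      = -Complex.I * (2 * Real.pi * F.eval z) := by
  have hH := D.differentiableOn_kernelFun hz
  refine D.integral_eq_of_kernelFun hz (g := fun u => u⁻¹ ^ n)
    ((continuousOn_inv₀.mono fun u hu => hu.2).pow n) fun ρ h0 h1 => ?_
  have hu0 : ∀ θ, circleMap 0 ρ θ ≠ 0 := fun θ => circleMap_ne_center h0.ne'
  have hub : ∀ θ, circleMap 0 ρ θ ∈ Metric.ball (0 : ℂ) 1 := fun θ => by simp [abs_of_pos h0, h1]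
  set e : ℂ → ℂ := Function.update (fun u => u⁻¹ ^ n - F.eval (Ψ u / u)) 0 0 with he
  have he' : ∀ u, u ≠ 0 → e u = u⁻¹ ^ n - F.eval (Ψ u / u) := fun u hu =>
    Function.update_of_ne hu _ _
  have hed : DifferentiableOn ℂ e (Metric.ball 0 1) := by
    rw [← Complex.differentiableOn_compl_singleton_and_continuousAt_iff
      (Metric.ball_mem_nhds (0 : ℂ) one_pos)]
    refine ⟨fun u hu => ?_, continuousAt_update_same.2 hF⟩
    have hu' : u ≠ 0 := hu.2
    refine DifferentiableAt.differentiableWithinAt ?_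
    refine DifferentiableAt.congr_of_eventuallyEq (f := fun u => u⁻¹ ^ n - F.eval (Ψ u / u)) ?_ ?_
    · exact ((differentiableAt_inv hu').pow n).sub
        (F.differentiable.differentiableAt.comp u (D.hasDerivAt_div hu.1 hu').differentiableAt)
    · filter_upwards [isOpen_ne.mem_nhds hu'] with v hv using he' v hv
  have hzero := integral_circleMap_eq (hed.mul hH) h0 h1
  simp only [Pi.mul_apply] at hzero
  rw [show e 0 = 0 from Function.update_self _ _ _, zero_mul, mul_zero] at hzero
  have hHc : Continuous fun θ => kernelFun Ψ z (circleMap 0 ρ θ) :=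
    hH.continuousOn.comp_continuous (continuous_circleMap 0 ρ) hub
  have hqc : Continuous fun θ => (circleMap 0 ρ θ)⁻¹ := (continuous_circleMap 0 ρ).inv₀ hu0
  have hχc : Continuous fun θ => F.eval (Ψ (circleMap 0 ρ θ) / circleMap 0 ρ θ) :=
    F.continuous.comp (continuous_iff_continuousAt.2 fun θ =>
      (D.hasDerivAt_div_circleMap h0 h1 θ).continuousAt)
  refine (sub_eq_zero.1 (Eq.trans ?_ hzero)).trans (D.integral_eval_mul_kernelFun hz F h0 h1)
  rw [← intervalIntegral.integral_sub (((hqc.fun_pow n).fun_mul hHc).intervalIntegrable _ _)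
    ((hχc.fun_mul hHc).intervalIntegrable _ _)]
  refine intervalIntegral.integral_congr fun θ _ => ?_
  rw [he' _ (hu0 θ)]
  ring

/-- The Faber polynomial at an interior point, as an integral against the angular kernel. -/
lemma eval_eq_integral_im (D : DiskParam Ψ f f' τ) {z : ℂ}
    (hz : ∀ u ∈ Metric.closedBall (0 : ℂ) 1, Ψ u - z * u ≠ 0) {F : Polynomial ℂ} {n : ℕ}
    (hn : 1 ≤ n) (hF : Tendsto (fun u => u⁻¹ ^ n - F.eval (Ψ u / u)) (𝓝[≠] 0) (𝓝 0)) :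
    F.eval z = -(Real.pi : ℂ)⁻¹ * ∫ s in 0..2 * Real.pi,
      (circleMap 0 1 (τ s))⁻¹ ^ n * ((f' s / (f s - z)).im : ℂ) := by
  have h1 := D.integral_inv_pow_mul_cauchy hz hF
  have h2 := congrArg (starRingEnd ℂ) (D.integral_pow_mul_cauchy hz hn)
  have hfz : ∀ s, f s - z ≠ 0 := fun s h => by
    refine hz (circleMap 0 1 (τ s)) (by simp) ?_
    rwa [D.boundary, sub_eq_zero, div_eq_iff (circleMap_ne_center one_ne_zero), ← sub_eq_zero] at h
  have hk : Continuous fun s => f' s / (f s - z) :=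
    D.continuous_deriv.div (D.continuous.sub continuous_const) hfz
  have hq : Continuous fun s => (circleMap 0 1 (τ s))⁻¹ ^ n :=
    (((continuous_circleMap 0 1).comp D.continuous_arg).inv₀
      fun _ => circleMap_ne_center one_ne_zero).pow n
  rw [map_zero, intervalIntegral.integral_of_le Real.two_pi_pos.le, ← integral_conj,
    ← intervalIntegral.integral_of_le Real.two_pi_pos.le] at h2
  have h3 : ∫ s in 0..2 * Real.pi, (circleMap 0 1 (τ s))⁻¹ ^ n *
      starRingEnd ℂ (f' s / (f s - z)) = 0 := by
    refine Eq.trans (intervalIntegral.integral_congr fun s _ => ?_) h2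
    rw [map_mul, map_pow, Complex.inv_eq_conj (by simp)]
  have h4 : ∫ s in 0..2 * Real.pi, (circleMap 0 1 (τ s))⁻¹ ^ n * ((f' s / (f s - z)).im : ℂ) =
      (2 * Complex.I)⁻¹ * ((∫ s in 0..2 * Real.pi, (circleMap 0 1 (τ s))⁻¹ ^ n *
        (f' s / (f s - z))) - ∫ s in 0..2 * Real.pi, (circleMap 0 1 (τ s))⁻¹ ^ n *
        starRingEnd ℂ (f' s / (f s - z))) := by
    have hk' : Continuous fun s => starRingEnd ℂ (f' s / (f s - z)) :=
      Complex.continuous_conj.comp hk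
    rw [← intervalIntegral.integral_sub ((hq.fun_mul hk).intervalIntegrable _ _)
      ((hq.fun_mul hk').intervalIntegrable _ _),
      ← intervalIntegral.integral_const_mul]
    refine intervalIntegral.integral_congr fun s _ => ?_
    rw [← mul_sub, Complex.sub_conj]
    have := Complex.I_ne_zero
    push_cast
    field_simp
  rw [h4, h1, h3]
  have := Complex.I_ne_zero
  have : (Real.pi : ℂ) ≠ 0 := by exact_mod_cast Real.pi_ne_zero
  field_simp
  ring

/-- The Fourier coefficients of `f'` in the boundary parameter tend to zero. -/
lemma tendsto_integral_inv_pow_mul_deriv (D : DiskParam Ψ f f' τ) :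
    Tendsto (fun n : ℕ => ∫ s in 0..2 * Real.pi, (circleMap 0 1 (τ s))⁻¹ ^ n * f' s) atTop
      (𝓝 0) := by
  have key : ∀ n : ℕ, ∫ s in 0..2 * Real.pi, (circleMap 0 1 (τ s))⁻¹ ^ n * f' s =
      -Complex.I * (2 * Real.pi * taylorCoeff (fun u => Ψ u - u * deriv Ψ u) (n + 1)) := by
    intro n
    refine tendsto_nhds_unique (D.tendsto_integral_circleMap (X := fun u => u⁻¹ ^ n)
      ((continuousOn_inv₀.mono fun u hu => hu.2).pow n)) (tendsto_const_nhds.congr' ?_)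
    filter_upwards [Ioo_mem_nhdsLT (zero_lt_one' ℝ)] with ρ hρ
    rw [← integral_zpow_neg_mul_circleMap D.differentiableOn_fac hρ.1 hρ.2,
      ← intervalIntegral.integral_const_mul]
    refine intervalIntegral.integral_congr fun θ _ => ?_
    have h0 : circleMap 0 ρ θ ≠ 0 := circleMap_ne_center hρ.1.ne'
    rw [zpow_neg, zpow_natCast, pow_succ, inv_pow, mul_inv]
    ring
  simp_rw [key]
  have := ((D.tendsto_taylorCoeff_fac.comp (tendsto_add_atTop_nat 1)).const_mul
    (2 * Real.pi : ℂ)).const_mul (-Complex.I)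
  simpa using this
end DiskParam

lemma integral_logDeriv_eq_zero_of_mem_slitPlane {g g' : ℝ → ℂ} {T : ℝ}
    (hg : ∀ s, HasDerivAt g (g' s) s) (hc : Continuous g') (hs : ∀ s, g s ∈ Complex.slitPlane)
    (hT : Function.Periodic g T) : ∫ s in 0..T, g' s / g s = 0 := by
  have hgc : Continuous g := continuous_iff_continuousAt.2 fun s => (hg s).continuousAt
  have hd : ∀ s, HasDerivAt (fun s => Complex.log (g s)) (g' s / g s) s := fun s =>
    (hg s).clog_real (hs s)
  rw [intervalIntegral.integral_eq_sub_of_hasDerivAt (fun s _ => hd s)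
    ((hc.div hgc fun s => Complex.slitPlane_ne_zero (hs s)).intervalIntegrable _ _)]
  have := hT 0
  rw [zero_add] at this
  rw [this, sub_self]

section Winding

variable {f f' : ℝ → ℂ} {T : ℝ}

lemma integral_cauchy_eq_of_forall_norm_lt (hf : ∀ s, HasDerivAt f (f' s) s) (hc : Continuous f')
    (hT : Function.Periodic f T) {z w : ℂ} (h : ∀ s, ‖w - z‖ < ‖f s - w‖) :
    ∫ s in 0..T, f' s / (f s - z) = ∫ s in 0..T, f' s / (f s - w) := by
  have hfc : Continuous f := continuous_iff_continuousAt.2 fun s => (hf s).continuousAt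
  have hw : ∀ s, f s - w ≠ 0 := fun s => norm_pos_iff.1 ((norm_nonneg _).trans_lt (h s))
  have hz : ∀ s, f s - z ≠ 0 := fun s hs => by
    have := h s
    rw [← sub_eq_zero.1 hs, norm_sub_rev] at this
    exact this.false
  have hd : ∀ s, HasDerivAt (fun s => 1 + (w - z) / (f s - w))
      ((w - z) * (-f' s / (f s - w) ^ 2)) s := fun s =>
    ((((hf s).sub_const w).fun_inv (hw s)).const_mul (w - z)).const_add 1
  have key := integral_logDeriv_eq_zero_of_mem_slitPlane (T := T) hd
    (continuous_const.mul (hc.neg.div ((hfc.sub continuous_const).pow 2)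
      fun s => pow_ne_zero 2 (hw s)))
    (fun s => Complex.mem_slitPlane_of_norm_lt_one (by
      rw [norm_div, div_lt_one (norm_pos_iff.2 (hw s))]; exact h s))
    (fun s => by simp only [hT s])
  have hi : ∀ v, (∀ s, f s - v ≠ 0) →
      IntervalIntegrable (fun s => f' s / (f s - v)) volume 0 T := fun v hv =>
    (hc.div (hfc.sub continuous_const) hv).intervalIntegrable _ _
  rw [← sub_eq_zero, ← intervalIntegral.integral_sub (hi z hz) (hi w hw)]
  refine Eq.trans (intervalIntegral.integral_congr fun s _ => ?_) key
  have h1 := hw s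
  have h2 := hz s
  have h3 : 1 + (w - z) / (f s - w) = (f s - z) / (f s - w) := by field_simp; ring
  simp only [h3]
  field_simp
  ring

lemma integral_cauchy_eq_zero_of_forall_norm_lt (hf : ∀ s, HasDerivAt f (f' s) s)
    (hc : Continuous f') (hT : Function.Periodic f T) {z : ℂ} (h : ∀ s, ‖f s‖ < ‖z‖) :
    ∫ s in 0..T, f' s / (f s - z) = 0 := by
  have hz : z ≠ 0 := norm_pos_iff.1 ((norm_nonneg _).trans_lt (h 0))
  have hd : ∀ s, HasDerivAt (fun s => 1 + -(f s / z)) (-(f' s / z)) s := fun s =>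
    (((hf s).div_const z).fun_neg).const_add 1
  have key := integral_logDeriv_eq_zero_of_mem_slitPlane (T := T) hd (hc.div_const z).neg
    (fun s => Complex.mem_slitPlane_of_norm_lt_one (by
      rw [norm_neg, norm_div, div_lt_one (norm_pos_iff.2 hz)]; exact h s))
    (fun s => by simp only [hT s])
  refine Eq.trans (intervalIntegral.integral_congr fun s _ => ?_) key
  have h2 : f s - z ≠ 0 := fun hs => by
    have := h s
    rw [sub_eq_zero.1 hs] at this
    exact this.false
  have h3 : 1 + -(f s / z) = -(f s - z) / z := by field_simp; ring
  simp only [h3]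
  field_simp

lemma isOpen_preimage_integral_cauchy (hf : ∀ s, HasDerivAt f (f' s) s) (hc : Continuous f')
    (hT : Function.Periodic f T) (hr : IsClosed (range f)) (S : Set ℂ) :
    IsOpen {z | z ∉ range f ∧ ∫ s in 0..T, f' s / (f s - z) ∈ S} := by
  rw [Metric.isOpen_iff]
  rintro w ⟨hw, hwS⟩
  obtain ⟨ε, hε, hb⟩ := Metric.isOpen_iff.1 hr.isOpen_compl w hw
  refine ⟨ε, hε, fun z hz => ⟨hb hz, ?_⟩⟩
  rw [integral_cauchy_eq_of_forall_norm_lt hf hc hT (w := w)]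
  · exact hwS
  · intro s
    have h1 : ε ≤ ‖f s - w‖ := by
      by_contra! hlt
      exact hb (mem_ball_iff_norm.2 hlt) ⟨s, rfl⟩
    rw [Metric.mem_ball, dist_eq_norm, norm_sub_rev] at hz
    exact hz.trans_le h1

lemma integral_cauchy_eq_zero_of_mem_exteriorDomain (hf : ∀ s, HasDerivAt f (f' s) s)
    (hc : Continuous f') (hT : Function.Periodic f T) (hr : IsCompact (range f)) {z : ℂ}
    (hz : z ∈ exteriorDomain (range f)) : ∫ s in 0..T, f' s / (f s - z) = 0 := by
  obtain ⟨R, hR⟩ := hr.isBounded.exists_norm_le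
  obtain ⟨w, hwc, hwR⟩ : ∃ w ∈ connectedComponentIn (range f)ᶜ z, R < ‖w‖ := by
    by_contra! hcon
    exact hz.2 (isBounded_iff_forall_norm_le.2 ⟨R, hcon⟩)
  have hw0 := integral_cauchy_eq_zero_of_forall_norm_lt hf hc hT (z := w)
    fun s => (hR _ ⟨s, rfl⟩).trans_lt hwR
  have hsub := connectedComponentIn_subset (range f)ᶜ z
  have := isPreconnected_connectedComponentIn.subset_left_of_subset_union
    (isOpen_preimage_integral_cauchy hf hc hT hr.isClosed {0})
    (isOpen_preimage_integral_cauchy hf hc hT hr.isClosed {0}ᶜ)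
    (Set.disjoint_left.2 fun x h1 h2 => h2.2 h1.2)
    (fun x hx => (em (∫ s in 0..T, f' s / (f s - x) = 0)).imp
      (fun h => ⟨hsub hx, h⟩) (fun h => ⟨hsub hx, h⟩))
    ⟨w, hwc, hsub hwc, hw0⟩
  exact (this (mem_connectedComponentIn hz.1)).2

end Winding

lemma diskParamOf_sub_mul_ne_zero {Γ : Set ℂ} {φ ψ : ℂ → ℂ} {c : ℝ} (hφ : IsExteriorMap Γ φ c)
    (hψ : IsExteriorParam Γ φ ψ) {z : ℂ} (hz : z ∉ exteriorDomain Γ ∪ Γ) :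
    ∀ u ∈ Metric.closedBall (0 : ℂ) 1, diskParamOf ψ c u - z * u ≠ 0 := by
  intro u hu h0
  rcases eq_or_ne u 0 with rfl | hu0
  · simp [diskParamOf_zero, hφ.cpos.ne'] at h0
  · rw [sub_eq_zero, ← div_eq_iff hu0, diskParamOf_div hu0] at h0
    rw [mem_closedBall_zero_iff] at hu
    have h1 : 1 ≤ ‖u⁻¹‖ := by
      rw [norm_inv]
      exact (one_le_inv₀ (norm_pos_iff.2 hu0)).2 hu
    rcases h1.lt_or_eq with h1 | h1
    · exact hz (Or.inl (h0 ▸ (hψ.inv _ h1).1))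
    · exact hz (Or.inr (h0 ▸ hψ.boundary _ h1.symm))

lemma IsFaberPoly.tendsto_diskParamOf {Γ : Set ℂ} {φ ψ φb : ℂ → ℂ} {c : ℝ} {n : ℕ}
    {F : Polynomial ℂ} (hF : IsFaberPoly Γ φ n F) (hΓ : IsClosed Γ) (hψ : IsExteriorParam Γ φ ψ)
    (hφb_eq : ∀ z ∈ exteriorDomain Γ, φb z = φ z)
    (hφb_cont : ContinuousOn φb (exteriorDomain Γ ∪ Γ)) :
    Tendsto (fun u => u⁻¹ ^ n - F.eval (diskParamOf ψ c u / u)) (𝓝[≠] 0) (𝓝 0) := by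
  have h := (hF.comp (tendsto_exteriorParam hΓ hψ hφb_eq hφb_cont)).comp
    tendsto_inv₀_nhdsNE_zero
  refine h.congr' ?_
  filter_upwards [self_mem_nhdsWithin, mem_nhdsWithin_of_mem_nhds (Metric.ball_mem_nhds 0 one_pos)]
    with u hu hu1
  have h1 : 1 < ‖u⁻¹‖ := by
    rw [norm_inv]
    exact (one_lt_inv₀ (norm_pos_iff.2 hu)).2 (mem_ball_zero_iff.1 hu1)
  simp only [Function.comp_apply, (hψ.inv _ h1).2, diskParamOf_div (c := c) hu]

/-- The point at signed distance `η * ‖f' s‖` from `f s` on the normal to the curve `f`. -/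
def normalShift (f f' : ℝ → ℂ) (s η : ℝ) : ℂ := f s - Complex.I * η * f' s

lemma normalShift_zero (f f' : ℝ → ℂ) (s : ℝ) : normalShift f f' s 0 = f s := by
  simp [normalShift]

lemma continuous_normalShift (f f' : ℝ → ℂ) (s : ℝ) : Continuous (normalShift f f' s) := by
  unfold normalShift
  fun_prop

namespace DiniDiskParam

variable {Ψ : ℂ → ℂ} {f f' : ℝ → ℂ} {τ ω : ℝ → ℝ}

lemma exists_modulus_lt (D : DiniDiskParam Ψ f f' τ ω) {ε : ℝ} (hε : 0 < ε) :
    ∃ r, 0 < r ∧ ω r < ε := by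
  by_contra! h
  have hi : IntegrableOn (fun t : ℝ => t⁻¹) (Ioc 0 1) := by
    refine (D.dini.const_mul ε⁻¹).mono' (by fun_prop) ?_
    filter_upwards [ae_restrict_mem measurableSet_Ioc] with t ht
    rw [Real.norm_of_nonneg (inv_nonneg.2 ht.1.le), ← mul_div_assoc, inv_eq_one_div]
    gcongr
    · exact ht.1.le
    · rw [inv_mul_eq_div, one_le_div hε]
      exact h t ht.1
  have := (intervalIntegrable_iff_integrableOn_Ioc_of_le zero_le_one).2 hi
  simp [intervalIntegrable_inv_iff] at this

lemma norm_sub_sub_le (D : DiniDiskParam Ψ f f' τ ω) (s x : ℝ) :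
    ‖f (s + x) - f s - x * f' s‖ ≤ ω |x| * |x| := by
  have hd : ∀ y : ℝ, HasDerivAt (fun y : ℝ => f (s + y) - y * f' s) (f' (s + y) - f' s) y :=
    fun y => by
      have := ((D.hasDerivAt (s + y)).comp_const_add s y).fun_sub
        ((Complex.ofRealCLM.hasDerivAt (x := y)).mul_const (f' s))
      simpa using this
  have := Convex.norm_image_sub_le_of_norm_hasDerivWithin_le (s := Icc (-|x|) |x|)
    (x := 0) (y := x) (C := ω |x|)
    (fun y _ => (hd y).hasDerivWithinAt) (fun y hy => by
      refine (D.norm_sub_le _ _).trans (D.monotone_modulus ?_)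
      rw [add_sub_cancel_left]
      exact abs_le.2 hy) (convex_Icc _ _)
    (abs_le.1 (by simp)) (abs_le.1 le_rfl)
  simp only [add_zero, Complex.ofReal_zero, zero_mul, sub_zero, Real.norm_eq_abs] at this
  rwa [sub_right_comm]

lemma exists_le_norm_deriv (D : DiniDiskParam Ψ f f' τ ω) : ∃ m, 0 < m ∧ ∀ s, m ≤ ‖f' s‖ := by
  obtain ⟨_, ⟨s, rfl⟩, hs⟩ := (D.periodic_deriv.compact_of_continuous Real.two_pi_pos.ne'
    D.continuous_deriv).exists_isMinOn (range_nonempty _) continuous_norm.continuousOn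
  exact ⟨‖f' s‖, norm_pos_iff.2 (D.deriv_ne_zero s), fun t => hs ⟨t, rfl⟩⟩

lemma exists_norm_deriv_le (D : DiniDiskParam Ψ f f' τ ω) : ∃ M, 0 < M ∧ ∀ s, ‖f' s‖ ≤ M := by
  obtain ⟨M, hM⟩ := (D.periodic_deriv.compact_of_continuous Real.two_pi_pos.ne'
    D.continuous_deriv).isBounded.exists_norm_le
  exact ⟨M, (norm_pos_iff.2 (D.deriv_ne_zero 0)).trans_le (hM _ ⟨0, rfl⟩), fun s => hM _ ⟨s, rfl⟩⟩

lemma exists_le_norm_sub (D : DiniDiskParam Ψ f f' τ ω) {r : ℝ} (hr : 0 < r) :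
    ∃ d, 0 < d ∧ ∀ s x, r ≤ |x| → |x| ≤ Real.pi → d ≤ ‖f (s + x) - f s‖ := by
  rcases lt_or_ge Real.pi r with hπ | hπ
  · exact ⟨1, one_pos, fun s x h1 h2 => absurd (h1.trans h2) (not_le.2 hπ)⟩
  have hK : IsCompact (Icc (0 : ℝ) (2 * Real.pi) ×ˢ (Icc (-Real.pi) Real.pi ∩ {x | r ≤ |x|})) :=
    isCompact_Icc.prod (isCompact_Icc.inter_right (isClosed_le continuous_const continuous_abs))
  have hf := D.continuous
  obtain ⟨⟨s₀, x₀⟩, h0, hmin⟩ := hK.exists_isMinOn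
    ⟨(0, Real.pi), ⟨⟨le_rfl, Real.two_pi_pos.le⟩, ⟨by linarith, le_rfl⟩,
      by simpa [abs_of_pos Real.pi_pos] using hπ⟩⟩
    (f := fun p : ℝ × ℝ => ‖f (p.1 + p.2) - f p.1‖) (by fun_prop)
  refine ⟨‖f (s₀ + x₀) - f s₀‖, norm_pos_iff.2 (sub_ne_zero.2 fun h => ?_),
    fun s x h1 h2 => ?_⟩
  · obtain ⟨n, hn⟩ := D.inj _ _ h
    have hx : |x₀| ≤ Real.pi := abs_le.2 h0.2.1
    have hx' : r ≤ |x₀| := h0.2.2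
    have hn' : x₀ = -(n * (2 * Real.pi)) := by linarith
    rcases eq_or_ne n 0 with rfl | hn0
    · simp only [Int.cast_zero, zero_mul, neg_zero] at hn'
      rw [hn', abs_zero] at hx'
      linarith
    · have : (1 : ℝ) ≤ |(n : ℝ)| := by exact_mod_cast Int.one_le_abs hn0
      rw [hn', abs_neg, abs_mul, abs_of_pos Real.two_pi_pos] at hx
      nlinarith [Real.pi_pos]
  · obtain ⟨k, hk⟩ : ∃ k : ℤ, s - k * (2 * Real.pi) ∈ Icc 0 (2 * Real.pi) := by
      refine ⟨⌊s / (2 * Real.pi)⌋, ?_, ?_⟩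
      · have := Int.floor_le (s / (2 * Real.pi))
        rw [le_div_iff₀ Real.two_pi_pos] at this
        linarith
      · have := Int.lt_floor_add_one (s / (2 * Real.pi))
        rw [div_lt_iff₀ Real.two_pi_pos] at this
        linarith
    have := hmin (show (s - k * (2 * Real.pi), x) ∈ _ from ⟨hk, abs_le.1 h2, h1⟩)
    simp only [Set.mem_ofPred_eq] at this
    have e : ∀ y, f (y - k * (2 * Real.pi)) = f y := fun y => D.periodic.sub_int_mul_eq k
    rwa [e, sub_add_eq_add_sub, e] at this

lemma exists_mul_abs_le_norm_sub (D : DiniDiskParam Ψ f f' τ ω) :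
    ∃ κ η₀, 0 < κ ∧ 0 < η₀ ∧ ∀ s x η : ℝ, |x| ≤ Real.pi → |η| ≤ η₀ →
      κ * |x| ≤ ‖f (s + x) - normalShift f f' s η‖ := by
  obtain ⟨m, hm, hm'⟩ := D.exists_le_norm_deriv
  obtain ⟨M, hM, hM'⟩ := D.exists_norm_deriv_le
  obtain ⟨r, hr, hr'⟩ := D.exists_modulus_lt (half_pos hm)
  obtain ⟨d, hd, hd'⟩ := D.exists_le_norm_sub hr
  refine ⟨min (m / 2) (d / (2 * Real.pi)), d / (2 * M), by positivity, by positivity,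
    fun s x η hx hη => ?_⟩
  rcases le_total |x| r with hxr | hxr
  · have h1 : f (s + x) - normalShift f f' s η =
        (x + Complex.I * η) * f' s + (f (s + x) - f s - x * f' s) := by
      rw [normalShift]; ring
    have h2 : |x| ≤ ‖(x + Complex.I * η : ℂ)‖ := by
      simpa using Complex.abs_re_le_norm (x + Complex.I * η : ℂ)
    have h3 := (D.norm_sub_sub_le s x).trans
      (mul_le_mul_of_nonneg_right ((D.monotone_modulus hxr).trans hr'.le) (abs_nonneg x))
    have h4 : |x| * m ≤ ‖(x + Complex.I * η) * f' s‖ := by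
      rw [norm_mul]
      gcongr
      exact hm' s
    rw [h1]
    have h5 := norm_sub_le_norm_add ((x + Complex.I * η) * f' s) (f (s + x) - f s - x * f' s)
    calc _ ≤ m / 2 * |x| := by gcongr; exact min_le_left _ _
      _ ≤ _ := by linarith
  · have h1 : f (s + x) - normalShift f f' s η =
        (f (s + x) - f s) + Complex.I * η * f' s := by
      rw [normalShift]; ring
    have h2 : ‖Complex.I * η * f' s‖ ≤ d / 2 := by
      rw [norm_mul, norm_mul, Complex.norm_I, one_mul, Complex.norm_real, Real.norm_eq_abs]
      calc _ ≤ d / (2 * M) * M := by gcongr; exact hM' s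
        _ = d / 2 := by field_simp
    rw [h1]
    have h5 := norm_sub_le_norm_add (f (s + x) - f s) (Complex.I * η * f' s)
    have h6 := hd' s x hxr hx
    calc _ ≤ d / (2 * Real.pi) * Real.pi := by gcongr; exact min_le_right _ _
      _ = d / 2 := by field_simp
      _ ≤ _ := by linarith

lemma norm_kernel_sub_le (D : DiniDiskParam Ψ f f' τ ω) {κ : ℝ} (hκ : 0 < κ) {s x η : ℝ}
    (hx : x ≠ 0) (h : κ * |x| ≤ ‖f (s + x) - normalShift f f' s η‖) :
    ‖f' (s + x) / (f (s + x) - normalShift f f' s η) - 1 / (x + Complex.I * η)‖ ≤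
      2 / κ * (ω |x| / |x|) := by
  set N := f (s + x) - normalShift f f' s η with hN
  have hx' : 0 < |x| := abs_pos.2 hx
  have h0 : 0 < ‖N‖ := (mul_pos hκ hx').trans_le h
  have h2 : |x| ≤ ‖(x + Complex.I * η : ℂ)‖ := by
    simpa using Complex.abs_re_le_norm (x + Complex.I * η : ℂ)
  have hN0 : N ≠ 0 := norm_pos_iff.1 h0
  have hE0 : (x + Complex.I * η : ℂ) ≠ 0 := norm_pos_iff.1 (hx'.trans_le h2)
  have e : f' (s + x) / N - 1 / (x + Complex.I * η) = (f' (s + x) - f' s) / N -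
      (f (s + x) - f s - x * f' s) / (N * (x + Complex.I * η)) := by
    have : N = (x + Complex.I * η) * f' s + (f (s + x) - f s - x * f' s) := by
      rw [hN, normalShift]; ring
    rw [div_sub_div _ _ hN0 hE0, div_sub_div _ _ hN0 (mul_ne_zero hN0 hE0), div_eq_div_iff
      (mul_ne_zero hN0 hE0) (mul_ne_zero hN0 (mul_ne_zero hN0 hE0))]
    linear_combination (-N * N * (x + Complex.I * η)) * this
  rw [e]
  refine (_root_.norm_sub_le _ _).trans ?_
  have h3 : ‖(f' (s + x) - f' s) / N‖ ≤ ω |x| / (κ * |x|) := by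
    rw [norm_div]
    gcongr
    · exact D.modulus_nonneg _
    · simpa using D.norm_sub_le (s + x) s
  have h4 : ‖(f (s + x) - f s - x * f' s) / (N * (x + Complex.I * η))‖ ≤
      ω |x| * |x| / (κ * |x| * |x|) := by
    rw [norm_div, norm_mul]
    gcongr
    · exact mul_nonneg (D.modulus_nonneg _) (abs_nonneg _)
    · exact D.norm_sub_sub_le s x
  calc _ ≤ _ := add_le_add h3 h4
    _ = _ := by field_simp; norm_num

end DiniDiskParam

lemma tendsto_integral_mul_poisson {g : ℝ → ℂ} (hg : Continuous g) {a : ℝ} (ha : 0 < a) :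
    Tendsto (fun η : ℝ => ∫ x in -a..a, g x * ((η / (x ^ 2 + η ^ 2) : ℝ) : ℂ)) (𝓝[>] 0)
      (𝓝 (Real.pi * g 0)) := by
  have h1 : ∫ x : ℝ, Real.pi⁻¹ * (1 + x ^ 2)⁻¹ = 1 := by
    rw [integral_const_mul, integral_univ_inv_one_add_sq, inv_mul_cancel₀ Real.pi_ne_zero]
  have h2 : Tendsto (fun x : ℝ => ‖x‖ ^ Module.finrank ℝ ℝ * (Real.pi⁻¹ * (1 + x ^ 2)⁻¹))
      (Bornology.cobounded ℝ) (𝓝 0) := by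
    have h3 : Tendsto (fun x : ℝ => Real.pi⁻¹ * ‖x‖⁻¹) (Bornology.cobounded ℝ) (𝓝 0) := by
      simpa using (tendsto_norm_cobounded_atTop (E := ℝ)).inv_tendsto_atTop.const_mul Real.pi⁻¹
    refine squeeze_zero (fun x => by positivity) (fun x => ?_) h3
    rw [Module.finrank_self, pow_one, mul_left_comm]
    gcongr
    rcases eq_or_ne x 0 with rfl | hx
    · simp
    · have : 0 < ‖x‖ := norm_pos_iff.2 hx
      rw [← div_eq_mul_inv, div_le_iff₀ (by positivity), inv_mul_eq_div, le_div_iff₀ this, ← sq,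
        Real.norm_eq_abs, sq_abs]
      linarith
  have hgi : Integrable ((Ioc (-a) a).indicator g) :=
    ((hg.intervalIntegrable (-a) a).1).integrable_indicator measurableSet_Ioc
  have hgc : ContinuousAt ((Ioc (-a) a).indicator g) 0 := by
    refine hg.continuousAt.congr ?_
    filter_upwards [Ioo_mem_nhds (neg_neg_of_pos ha) ha] with x hx
    rw [indicator_of_mem (Ioo_subset_Ioc_self hx)]
  have key := (tendsto_integral_comp_smul_smul_of_integrable (φ := fun x : ℝ =>
    Real.pi⁻¹ * (1 + x ^ 2)⁻¹) (fun x => by positivity) h1 h2 hgi hgc).comp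
      tendsto_inv_nhdsGT_zero
  rw [indicator_of_mem (show (0 : ℝ) ∈ Ioc (-a) a from ⟨neg_neg_of_pos ha, ha.le⟩)] at key
  refine (key.const_mul (Real.pi : ℂ)).congr' ?_
  filter_upwards [self_mem_nhdsWithin] with η hη
  have hη' : (0 : ℝ) < η := hη
  rw [Function.comp_apply, intervalIntegral.integral_of_le (by linarith),
    ← integral_indicator measurableSet_Ioc, ← integral_const_mul]
  refine integral_congr_ae (Eventually.of_forall fun x => ?_)
  simp only [indicator_apply]
  split_ifs
  · have : η⁻¹ * (Real.pi⁻¹ * (1 + (η⁻¹ * x) ^ 2)⁻¹) =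
        Real.pi⁻¹ * (η / (x ^ 2 + η ^ 2)) := by
      have : 0 < x ^ 2 + η ^ 2 := by positivity
      field_simp
      ring
    have hπ : (Real.pi : ℂ) ≠ 0 := by exact_mod_cast Real.pi_ne_zero
    simp only [Module.finrank_self, pow_one, smul_eq_mul, this, Complex.real_smul]
    push_cast
    field_simp
  · simp

lemma im_one_div_add_I_mul (x η : ℝ) :
    (1 / (x + Complex.I * η : ℂ)).im = -(η / (x ^ 2 + η ^ 2)) := by
  rw [one_div, Complex.inv_im, Complex.normSq_apply]
  simp
  ring

/-- The derivative at `s + x` of the argument of `f - f s`. -/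
def angKernel (f f' : ℝ → ℂ) (s x : ℝ) : ℝ := (f' (s + x) / (f (s + x) - f s)).im

namespace DiniDiskParam

variable {Ψ : ℂ → ℂ} {f f' : ℝ → ℂ} {τ ω : ℝ → ℝ}

lemma intervalIntegrable_modulus_div (D : DiniDiskParam Ψ f f' τ ω) :
    IntervalIntegrable (fun x => ω |x| / |x|) volume (-Real.pi) Real.pi := by
  refine intervalIntegrable_of_even (fun x => by rw [abs_neg]) (fun x hx => ?_)
  have h1 : IntervalIntegrable (fun t => ω t / t) volume 0 x := by
    refine IntervalIntegrable.trans (b := 1)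
      ((intervalIntegrable_iff_integrableOn_Ioc_of_le zero_le_one).2 D.dini) ?_
    refine (D.monotone_modulus.intervalIntegrable).mul_continuousOn
      (continuousOn_inv₀.mono fun t ht => ?_)
    exact ((lt_min one_pos hx).trans_le ht.1).ne'
  refine h1.congr fun t ht => ?_
  rw [uIoc_of_le hx.le] at ht
  rw [abs_of_pos ht.1]

lemma abs_angKernel_le (D : DiniDiskParam Ψ f f' τ ω) {κ : ℝ} (hκ : 0 < κ) {s x : ℝ}
    (hx : x ≠ 0) (h : κ * |x| ≤ ‖f (s + x) - f s‖) :
    |angKernel f f' s x| ≤ 2 / κ * (ω |x| / |x|) := by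
  have h1 := D.norm_kernel_sub_le hκ (η := 0) hx (by rwa [normalShift_zero])
  have h2 := (Complex.abs_im_le_norm _).trans h1
  rwa [Complex.sub_im, im_one_div_add_I_mul, normalShift_zero, zero_div, neg_zero, sub_zero]
    at h2

lemma measurable_angKernel (D : DiniDiskParam Ψ f f' τ ω) (s : ℝ) :
    Measurable (angKernel f f' s) := by
  have h1 := D.continuous.measurable
  have h2 := D.continuous_deriv.measurable
  exact Complex.measurable_im.comp ((h2.comp (measurable_const_add s)).div
    ((h1.comp (measurable_const_add s)).sub_const _))

lemma tendsto_integral_kernel_sub (D : DiniDiskParam Ψ f f' τ ω) (s : ℝ) {g : ℝ → ℂ}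
    (hg : Continuous g) :
    Tendsto (fun η : ℝ => ∫ x in -Real.pi..Real.pi, g x *
      ((f' (s + x) / (f (s + x) - normalShift f f' s η) - 1 / (x + Complex.I * η)).im : ℂ))
      (𝓝 0) (𝓝 (∫ x in -Real.pi..Real.pi, g x * angKernel f f' s x)) := by
  obtain ⟨κ, η₀, hκ, hη₀, hb⟩ := D.exists_mul_abs_le_norm_sub
  obtain ⟨B, hB⟩ := isCompact_Icc.exists_bound_of_continuousOn
    (s := Icc (-Real.pi) Real.pi) hg.continuousOn
  have h1 := D.continuous.measurable
  have h2 := D.continuous_deriv.measurable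
  have hπ : -Real.pi ≤ Real.pi := by linarith [Real.pi_pos]
  refine intervalIntegral.tendsto_integral_filter_of_dominated_convergence
    (fun x => B * (2 / κ * (ω |x| / |x|))) ?_ ?_
    ((D.intervalIntegrable_modulus_div.const_mul _).const_mul _) ?_
  · refine Eventually.of_forall fun η => Measurable.aestronglyMeasurable ?_
    refine hg.measurable.mul (Complex.measurable_ofReal.comp (Complex.measurable_im.comp ?_))
    exact ((h2.comp (measurable_const_add s)).div
      ((h1.comp (measurable_const_add s)).sub_const _)).sub
      (measurable_const.div (by fun_prop))
  · filter_upwards [Metric.closedBall_mem_nhds (0 : ℝ) hη₀] with η hη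
    filter_upwards [Measure.ae_ne volume 0] with x hx hxI
    rw [uIoc_of_le hπ] at hxI
    rw [mem_closedBall_zero_iff] at hη
    rw [norm_mul, Complex.norm_real]
    have hgx := hB x ⟨hxI.1.le, hxI.2⟩
    gcongr
    · exact (norm_nonneg _).trans hgx
    · exact (Complex.abs_im_le_norm _).trans (D.norm_kernel_sub_le hκ hx
        (hb s x η (abs_le.2 ⟨hxI.1.le, hxI.2⟩) hη))
  · filter_upwards [Measure.ae_ne volume 0] with x hx hxI
    rw [uIoc_of_le hπ] at hxI
    have hne : f (s + x) - f s ≠ 0 := by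
      have := hb s x 0 (abs_le.2 ⟨hxI.1.le, hxI.2⟩) (by simpa using hη₀.le)
      rw [normalShift_zero] at this
      exact norm_pos_iff.1 ((mul_pos hκ (abs_pos.2 hx)).trans_le this)
    have hc : ContinuousAt (fun η : ℝ => g x *
        ((f' (s + x) / (f (s + x) - normalShift f f' s η) -
          1 / (x + Complex.I * η)).im : ℂ)) 0 := by
      refine continuousAt_const.mul (Complex.continuous_ofReal.continuousAt.comp
        (Complex.continuous_im.continuousAt.comp (ContinuousAt.sub ?_ ?_)))
      · exact continuousAt_const.div (continuousAt_const.sub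
          (continuous_normalShift f f' s).continuousAt) (by rwa [normalShift_zero])
      · exact continuousAt_const.div (by fun_prop) (by simpa using hx)
    have h3 := hc.tendsto
    rwa [Complex.sub_im, im_one_div_add_I_mul, normalShift_zero, zero_div, neg_zero, sub_zero]
      at h3

lemma exists_normalShift_notMem (D : DiniDiskParam Ψ f f' τ ω) :
    ∃ η₀, 0 < η₀ ∧ ∀ s η, η ≠ 0 → |η| ≤ η₀ → normalShift f f' s η ∉ range f := by
  obtain ⟨κ, η₀, hκ, hη₀, hb⟩ := D.exists_mul_abs_le_norm_sub
  refine ⟨η₀, hη₀, ?_⟩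
  rintro s η h0 hη ⟨t, ht⟩
  obtain ⟨k, hk⟩ : ∃ k : ℤ, |t - s - k * (2 * Real.pi)| ≤ Real.pi := by
    refine ⟨round ((t - s) / (2 * Real.pi)), ?_⟩
    have := abs_sub_round ((t - s) / (2 * Real.pi))
    have h2 := Real.two_pi_pos
    rw [abs_le] at this ⊢
    have e : (t - s) / (2 * Real.pi) * (2 * Real.pi) = t - s := by field_simp
    constructor <;> nlinarith
  have h1 := hb s _ η hk hη
  have h2 : f (s + (t - s - k * (2 * Real.pi))) = normalShift f f' s η := by
    rw [← ht, ← D.periodic.sub_int_mul_eq k (x := t)]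
    congr 1
    ring
  rw [h2, sub_self, norm_zero] at h1
  have h3 : t - s - k * (2 * Real.pi) = 0 := by
    rw [← abs_eq_zero]
    exact le_antisymm (nonpos_of_mul_nonpos_right h1 hκ) (abs_nonneg _)
  rw [h3, add_zero, normalShift, eq_comm, sub_eq_self] at h2
  simp [D.deriv_ne_zero, h0] at h2

lemma tendsto_integral_kernel (D : DiniDiskParam Ψ f f' τ ω) (s : ℝ) {g : ℝ → ℂ}
    (hg : Continuous g) {σ : ℝ} (hσ : |σ| = 1) :
    Tendsto (fun η : ℝ => ∫ x in -Real.pi..Real.pi, g x *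
      ((f' (s + x) / (f (s + x) - normalShift f f' s (σ * η))).im : ℂ)) (𝓝[>] 0)
      (𝓝 ((∫ x in -Real.pi..Real.pi, g x * angKernel f f' s x) - σ * (Real.pi * g 0))) := by
  obtain ⟨η₀, hη₀, hn⟩ := D.exists_normalShift_notMem
  have hσ0 : σ ≠ 0 := by rintro rfl; simp at hσ
  have hσ2 : σ ^ 2 = 1 := by rw [← sq_abs, hσ, one_pow]
  have hσt : Tendsto (fun η : ℝ => σ * η) (𝓝[>] 0) (𝓝 0) := by
    have : Tendsto (fun η : ℝ => σ * η) (𝓝 0) (𝓝 (σ * 0)) :=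
      (continuous_const.mul continuous_id).tendsto 0
    rw [mul_zero] at this
    exact this.mono_left nhdsWithin_le_nhds
  refine (((D.tendsto_integral_kernel_sub s hg).comp hσt).sub
    ((tendsto_integral_mul_poisson hg Real.pi_pos).const_mul (σ : ℂ))).congr' ?_
  filter_upwards [self_mem_nhdsWithin, mem_nhdsWithin_of_mem_nhds
    (Metric.closedBall_mem_nhds (0 : ℝ) hη₀)] with η hη hη'
  have hη0 : (0 : ℝ) < η := hη
  have hne : ∀ x, f (s + x) - normalShift f f' s (σ * η) ≠ 0 := fun x hx =>
    hn s (σ * η) (mul_ne_zero hσ0 hη0.ne') (by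
      rw [abs_mul, hσ, one_mul]; simpa using hη') ⟨s + x, sub_eq_zero.1 hx⟩
  have hne' : ∀ x : ℝ, (x + Complex.I * (σ * η : ℝ) : ℂ) ≠ 0 := fun x hx => by
    have := congrArg Complex.im hx
    simp [hσ0, hη0.ne'] at this
  have hf := D.continuous
  have hf' := D.continuous_deriv
  have hk : Continuous fun x : ℝ => f' (s + x) / (f (s + x) - normalShift f f' s (σ * η)) :=
    Continuous.div (by fun_prop) (by fun_prop) hne
  have hk' : Continuous fun x : ℝ => 1 / (x + Complex.I * (σ * η : ℝ) : ℂ) :=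
    Continuous.div (by fun_prop) (by fun_prop) hne'
  have hc1 : Continuous fun x : ℝ => g x *
      ((f' (s + x) / (f (s + x) - normalShift f f' s (σ * η)) -
        1 / (x + Complex.I * (σ * η : ℝ))).im : ℂ) :=
    hg.mul (Complex.continuous_ofReal.comp (Complex.continuous_im.comp (hk.sub hk')))
  have hc2 : Continuous fun x : ℝ => g x * ((η / (x ^ 2 + η ^ 2) : ℝ) : ℂ) := by
    refine hg.mul (Complex.continuous_ofReal.comp (continuous_const.div (by fun_prop)
      fun x => ?_))
    positivity
  simp only [Function.comp_apply]
  rw [← intervalIntegral.integral_const_mul, ← intervalIntegral.integral_sub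
    (hc1.intervalIntegrable _ _) ((hc2.intervalIntegrable _ _).const_mul _)]
  refine intervalIntegral.integral_congr fun x _ => ?_
  simp only [Complex.sub_im, im_one_div_add_I_mul, mul_pow, hσ2, one_mul]
  push_cast
  ring

end DiniDiskParam

lemma Function.Periodic.intervalIntegral_eq_centered {E : Type*} [NormedAddCommGroup E]
    [NormedSpace ℝ E] {h : ℝ → E} (hh : Function.Periodic h (2 * Real.pi)) (s : ℝ) :
    ∫ t in 0..2 * Real.pi, h t = ∫ x in -Real.pi..Real.pi, h (s + x) := by
  have h1 := hh.intervalIntegral_add_eq 0 (s + -Real.pi)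
  rw [zero_add, show s + -Real.pi + 2 * Real.pi = s + Real.pi by ring] at h1
  rw [h1, intervalIntegral.integral_comp_add_left]

namespace DiniDiskParam

variable {Ψ : ℂ → ℂ} {f f' : ℝ → ℂ} {τ ω : ℝ → ℝ}

lemma tendsto_normalShift (f f' : ℝ → ℂ) (s σ : ℝ) :
    Tendsto (fun η : ℝ => normalShift f f' s (σ * η)) (𝓝[>] 0) (𝓝 (f s)) := by
  have := ((continuous_normalShift f f' s).comp (continuous_const_mul σ)).tendsto 0
  simp only [Function.comp_def, mul_zero, normalShift_zero] at this
  exact this.mono_left nhdsWithin_le_nhds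

lemma eventually_normalShift_notMem (D : DiniDiskParam Ψ f f' τ ω) (s : ℝ) {σ : ℝ}
    (hσ : |σ| = 1) : ∀ᶠ η in 𝓝[>] (0 : ℝ), normalShift f f' s (σ * η) ∉ range f := by
  obtain ⟨η₀, hη₀, hn⟩ := D.exists_normalShift_notMem
  filter_upwards [self_mem_nhdsWithin, mem_nhdsWithin_of_mem_nhds
    (Metric.closedBall_mem_nhds (0 : ℝ) hη₀)] with η hη hη'
  have hσ0 : σ ≠ 0 := by rintro rfl; simp at hσ
  exact hn s _ (mul_ne_zero hσ0 (ne_of_gt hη)) (by rw [abs_mul, hσ, one_mul]; simpa using hη')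

lemma tendsto_im_integral_cauchy (D : DiniDiskParam Ψ f f' τ ω) (s : ℝ) {σ : ℝ}
    (hσ : |σ| = 1) :
    Tendsto (fun η : ℝ => (∫ t in 0..2 * Real.pi,
      f' t / (f t - normalShift f f' s (σ * η))).im) (𝓝[>] 0)
      (𝓝 ((∫ x in -Real.pi..Real.pi, angKernel f f' s x) - σ * Real.pi)) := by
  have h := Complex.continuous_re.continuousAt.tendsto.comp
    (D.tendsto_integral_kernel s (g := fun _ => 1) continuous_const hσ)
  simp only [one_mul, mul_one, intervalIntegral.integral_ofReal] at h
  have e : ((∫ x in -Real.pi..Real.pi, angKernel f f' s x : ℝ) - (σ : ℂ) * Real.pi : ℂ).re =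
      (∫ x in -Real.pi..Real.pi, angKernel f f' s x) - σ * Real.pi := by simp
  rw [e] at h
  refine h.congr' ?_
  filter_upwards [D.eventually_normalShift_notMem s hσ] with η hη
  have hf := D.continuous
  have hf' := D.continuous_deriv
  have hk : Continuous fun t : ℝ => f' t / (f t - normalShift f f' s (σ * η)) :=
    Continuous.div (by fun_prop) (by fun_prop) fun t ht => hη ⟨t, sub_eq_zero.1 ht⟩
  have hp : Function.Periodic (fun t : ℝ => f' t / (f t - normalShift f f' s (σ * η)))
      (2 * Real.pi) := fun t => by simp only [D.periodic t, D.periodic_deriv t]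
  rw [hp.intervalIntegral_eq_centered s, Function.comp_apply, Complex.ofReal_re]
  exact Complex.imCLM.intervalIntegral_comp_comm
    ((hk.comp (continuous_const_add s)).intervalIntegrable _ _)

/-- Near a boundary point, the points on the positive normal lie inside the curve. -/
lemma eventually_forall_sub_mul_ne_zero (D : DiniDiskParam Ψ f f' τ ω)
    (hd : ∀ z ∉ range f, (∀ u ∈ Metric.closedBall (0 : ℂ) 1, Ψ u - z * u ≠ 0) ∨
      ∫ t in 0..2 * Real.pi, f' t / (f t - z) = 0) (s : ℝ) :
    ∀ᶠ η in 𝓝[>] (0 : ℝ), ∀ u ∈ Metric.closedBall (0 : ℂ) 1,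
        Ψ u - normalShift f f' s (1 * η) * u ≠ 0 := by
  have hval : ∀ σ : ℝ, |σ| = 1 → ∀ᶠ η in 𝓝[>] (0 : ℝ), (∫ t in 0..2 * Real.pi,
      f' t / (f t - normalShift f f' s (σ * η))).im ∈ ({0, -(2 * Real.pi)} : Set ℝ) := by
    intro σ hσ
    filter_upwards [D.eventually_normalShift_notMem s hσ] with η hη
    rcases hd _ hη with h | h
    · right
      simp [D.integral_cauchy h]
    · left
      rw [h, Complex.zero_im]
  have hcl : IsClosed ({0, -(2 * Real.pi)} : Set ℝ) := (Set.toFinite _).isClosed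
  have hp := D.tendsto_im_integral_cauchy s (σ := 1) (by simp)
  have h1 := hcl.mem_of_tendsto hp (hval 1 (by simp))
  have h2 := hcl.mem_of_tendsto (D.tendsto_im_integral_cauchy s (σ := -1) (by simp))
    (hval (-1) (by simp))
  simp only [mem_insert_iff, mem_singleton_iff] at h1 h2
  have hπ := Real.pi_pos
  have hne : (∫ x in -Real.pi..Real.pi, angKernel f f' s x) - 1 * Real.pi ≠ 0 := by
    rcases h1 with h1 | h1 <;> rcases h2 with h2 | h2 <;> linarith
  filter_upwards [hp.eventually_ne hne, D.eventually_normalShift_notMem s (σ := 1) (by simp)]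
    with η h3 h4
  refine (hd _ h4).resolve_right fun h => h3 ?_
  rw [h, Complex.zero_im]

lemma eval_boundary_eq (D : DiniDiskParam Ψ f f' τ ω)
    (hd : ∀ z ∉ range f, (∀ u ∈ Metric.closedBall (0 : ℂ) 1, Ψ u - z * u ≠ 0) ∨
      ∫ t in 0..2 * Real.pi, f' t / (f t - z) = 0) {F : Polynomial ℂ} {n : ℕ} (hn : 1 ≤ n)
    (hF : Tendsto (fun u => u⁻¹ ^ n - F.eval (Ψ u / u)) (𝓝[≠] 0) (𝓝 0)) (s : ℝ) :
    F.eval (f s) = (circleMap 0 1 (τ s))⁻¹ ^ n - (Real.pi : ℂ)⁻¹ *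
      ∫ x in -Real.pi..Real.pi, (circleMap 0 1 (τ (s + x)))⁻¹ ^ n * angKernel f f' s x := by
  have hq : Continuous fun x => (circleMap 0 1 (τ (s + x)))⁻¹ ^ n :=
    (((continuous_circleMap 0 1).comp (D.continuous_arg.comp (continuous_const_add s))).inv₀
      fun _ => circleMap_ne_center one_ne_zero).pow n
  have h1 := F.continuous.continuousAt.tendsto.comp (tendsto_normalShift f f' s 1)
  have h2 := (D.tendsto_integral_kernel s hq (σ := 1) (by simp)).const_mul (-(Real.pi : ℂ)⁻¹)
  refine (tendsto_nhds_unique_of_eventuallyEq h1 h2 ?_).trans ?_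
  · filter_upwards [D.eventually_forall_sub_mul_ne_zero hd s] with η hη
    have hp : Function.Periodic (fun t : ℝ => (circleMap 0 1 (τ t))⁻¹ ^ n *
        ((f' t / (f t - normalShift f f' s (1 * η))).im : ℂ)) (2 * Real.pi) := fun t => by
      have := D.periodic_circleMap_arg t
      simp only at this
      simp only [D.periodic t, D.periodic_deriv t, this]
    rw [Function.comp_apply, D.eval_eq_integral_im hη hn hF, hp.intervalIntegral_eq_centered s]
  · have hπ : (Real.pi : ℂ) ≠ 0 := by exact_mod_cast Real.pi_ne_zero
    simp only [add_zero]
    push_cast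
    field_simp
    ring

end DiniDiskParam

lemma fourier_two_pi_eq_zpow (k : ℤ) (x : ℝ) :
    fourier k (x : AddCircle (2 * Real.pi)) = circleMap 0 1 x ^ k := by
  rw [fourier_coe_apply, circleMap_zero, Complex.ofReal_one, one_mul, ← Complex.exp_int_mul]
  congr 1
  have : (Real.pi : ℂ) ≠ 0 := by exact_mod_cast Real.pi_ne_zero
  push_cast
  field_simp

namespace DiskParam

variable {Ψ : ℂ → ℂ} {f f' : ℝ → ℂ} {τ : ℝ → ℝ}

lemma continuous_inv_pow (D : DiskParam Ψ f f' τ) (n : ℕ) :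
    Continuous fun s => (circleMap 0 1 (τ s))⁻¹ ^ n :=
  (((continuous_circleMap 0 1).comp D.continuous_arg).inv₀
    fun _ => circleMap_ne_center one_ne_zero).pow n

lemma norm_inv_pow (τ : ℝ → ℝ) (n : ℕ) (s : ℝ) : ‖(circleMap 0 1 (τ s))⁻¹ ^ n‖ = 1 := by
  simp

lemma tendsto_integral_mul_fourier (D : DiskParam Ψ f f' τ) (k : ℤ) :
    Tendsto (fun n : ℕ => ∫ s in 0..2 * Real.pi, (circleMap 0 1 (τ s))⁻¹ ^ n *
      (f' s * fourier k (τ s : AddCircle (2 * Real.pi)))) atTop (𝓝 0) := by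
  have hq : ∀ s, circleMap 0 1 (τ s) ≠ 0 := fun s => circleMap_ne_center one_ne_zero
  have h := D.tendsto_integral_inv_pow_mul_deriv
  obtain ⟨j, rfl | rfl⟩ := k.eq_nat_or_neg
  · rw [← tendsto_add_atTop_iff_nat j]
    refine h.congr fun n => intervalIntegral.integral_congr fun s _ => ?_
    have := hq s
    simp only [fourier_two_pi_eq_zpow, zpow_natCast, pow_add, inv_pow]
    field_simp
  · refine (h.comp (tendsto_add_atTop_nat j)).congr fun n =>
      intervalIntegral.integral_congr fun s _ => ?_
    simp only [fourier_two_pi_eq_zpow, zpow_neg, zpow_natCast, pow_add, inv_pow]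
    ring

lemma tendsto_integral_mul_continuousMap (D : DiskParam Ψ f f' τ)
    (G : C(AddCircle (2 * Real.pi), ℂ)) :
    Tendsto (fun n : ℕ => ∫ s in 0..2 * Real.pi, (circleMap 0 1 (τ s))⁻¹ ^ n *
      (f' s * G (τ s : AddCircle (2 * Real.pi)))) atTop (𝓝 0) := by
  have : Fact (0 < 2 * Real.pi) := ⟨Real.two_pi_pos⟩
  have hcont : ∀ (n : ℕ) (G : C(AddCircle (2 * Real.pi), ℂ)), Continuous fun s =>
      (circleMap 0 1 (τ s))⁻¹ ^ n * (f' s * G (τ s : AddCircle (2 * Real.pi))) := fun n G =>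
    (D.continuous_inv_pow n).mul (D.continuous_deriv.mul (G.continuous.comp
      ((AddCircle.continuous_mk' _).comp D.continuous_arg)))
  have hspan : ∀ P ∈ Submodule.span ℂ (range (fourier (T := 2 * Real.pi))),
      Tendsto (fun n : ℕ => ∫ s in 0..2 * Real.pi, (circleMap 0 1 (τ s))⁻¹ ^ n *
        (f' s * P (τ s : AddCircle (2 * Real.pi)))) atTop (𝓝 0) := by
    intro P hP
    induction hP using Submodule.span_induction with
    | mem P hP =>
      obtain ⟨k, rfl⟩ := hP
      exact D.tendsto_integral_mul_fourier k
    | zero => simp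
    | add P Q _ _ hP hQ =>
      have := hP.add hQ
      rw [add_zero] at this
      refine this.congr fun n => ?_
      rw [← intervalIntegral.integral_add ((hcont n P).intervalIntegrable _ _)
        ((hcont n Q).intervalIntegrable _ _)]
      refine intervalIntegral.integral_congr fun s _ => ?_
      simp only [ContinuousMap.add_apply]
      ring
    | smul a P _ hP =>
      have := hP.const_mul a
      rw [mul_zero] at this
      refine this.congr fun n => ?_
      rw [← intervalIntegral.integral_const_mul]
      refine intervalIntegral.integral_congr fun s _ => ?_
      simp only [ContinuousMap.smul_apply, smul_eq_mul]
      ring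
  obtain ⟨M, hM⟩ := (D.periodic_deriv.compact_of_continuous Real.two_pi_pos.ne'
    D.continuous_deriv).isBounded.exists_norm_le
  have hM' : ∀ s, ‖f' s‖ ≤ M := fun s => hM _ ⟨s, rfl⟩
  have hM0 : 0 ≤ M := (norm_nonneg _).trans (hM' 0)
  rw [Metric.tendsto_atTop']
  intro ε hε
  have hG : G ∈ closure (Submodule.span ℂ (range (fourier (T := 2 * Real.pi))) :
      Set C(AddCircle (2 * Real.pi), ℂ)) := by
    rw [← Submodule.topologicalClosure_coe, span_fourier_closure_eq_top]
    trivial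
  obtain ⟨P, hP, hGP⟩ := Metric.mem_closure_iff.1 hG (ε / (2 * (2 * Real.pi * (M + 1))))
    (by positivity)
  obtain ⟨N, hN⟩ := Metric.tendsto_atTop'.1 (hspan P hP) (ε / 2) (half_pos hε)
  refine ⟨N, fun n hn => ?_⟩
  have h1 := hN n hn
  rw [dist_zero_right] at h1 ⊢
  have h2 : ‖(∫ s in 0..2 * Real.pi, (circleMap 0 1 (τ s))⁻¹ ^ n *
      (f' s * G (τ s : AddCircle (2 * Real.pi)))) - ∫ s in 0..2 * Real.pi,
      (circleMap 0 1 (τ s))⁻¹ ^ n * (f' s * P (τ s : AddCircle (2 * Real.pi)))‖ ≤ ε / 2 := by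
    rw [← intervalIntegral.integral_sub ((hcont n G).intervalIntegrable _ _)
      ((hcont n P).intervalIntegrable _ _)]
    refine (intervalIntegral.norm_integral_le_of_norm_le_const
      (C := M * (ε / (2 * (2 * Real.pi * (M + 1))))) fun s _ => ?_).trans ?_
    · rw [← mul_sub, ← mul_sub, norm_mul, norm_inv_pow, one_mul, norm_mul]
      have h3 : ‖G (τ s) - P (τ s)‖ ≤ dist G P := by
        rw [← dist_eq_norm]
        exact ContinuousMap.dist_apply_le_dist _
      exact mul_le_mul (hM' s) (h3.trans hGP.le) (norm_nonneg _) hM0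
    · rw [sub_zero, abs_of_pos Real.two_pi_pos]
      have : M * (ε / (2 * (2 * Real.pi * (M + 1)))) * (2 * Real.pi) = M / (M + 1) * (ε / 2) := by
        field_simp
      rw [this]
      refine mul_le_of_le_one_left (half_pos hε).le ?_
      rw [div_le_one (by positivity)]
      linarith
  calc _ ≤ _ := norm_le_norm_add_norm_sub' _ _
    _ < ε / 2 + ε / 2 := add_lt_add_of_lt_of_le h1 h2
    _ = ε := add_halves ε

/-- A Riemann–Lebesgue lemma with respect to the conformal parametrization. -/
lemma tendsto_integral_inv_pow_mul (D : DiskParam Ψ f f' τ) (h0 : ∀ s, f' s ≠ 0) {g : ℝ → ℂ}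
    (hg : Continuous g) (hp : Function.Periodic g (2 * Real.pi)) :
    Tendsto (fun n : ℕ => ∫ s in 0..2 * Real.pi, (circleMap 0 1 (τ s))⁻¹ ^ n * g s) atTop
      (𝓝 0) := by
  obtain ⟨h, hc, -, -, hτ, hadd⟩ := D.exists_inverse
  have hper : Function.Periodic (fun θ => g (h θ) / f' (h θ)) (2 * Real.pi) := fun θ => by
    simp only [hadd, hp (h θ), D.periodic_deriv (h θ)]
  have hcont : Continuous fun θ => g (h θ) / f' (h θ) :=
    (hg.comp hc).div (D.continuous_deriv.comp hc) fun θ => h0 _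
  refine (D.tendsto_integral_mul_continuousMap
    ⟨hper.lift, continuous_coinduced_dom.mpr hcont⟩).congr fun n =>
    intervalIntegral.integral_congr fun s _ => ?_
  simp only [ContinuousMap.coe_mk, Function.Periodic.lift_coe, hτ]
  have := h0 s
  field_simp

end DiskParam

lemma DiskParam.tendstoUniformlyOn_integral {Ψ : ℂ → ℂ} {f f' : ℝ → ℂ} {τ : ℝ → ℝ}
    (D : DiskParam Ψ f f' τ) (h0 : ∀ s, f' s ≠ 0) {k : ℝ → ℝ → ℂ}
    (hk : Continuous (Function.uncurry k)) (hp : ∀ s, Function.Periodic (k s) (2 * Real.pi))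
    {K : Set ℝ} (hK : IsCompact K) :
    TendstoUniformlyOn (fun (n : ℕ) s => ∫ t in 0..2 * Real.pi,
      (circleMap 0 1 (τ t))⁻¹ ^ n * k s t) (fun _ => 0) atTop K := by
  have hks : ∀ s, Continuous (k s) := fun s => hk.comp (by fun_prop : Continuous fun t => (s, t))
  rw [← tendstoLocallyUniformlyOn_iff_tendstoUniformlyOn_of_compact hK,
    Metric.tendstoLocallyUniformlyOn_iff]
  intro ε hε s₀ _
  have hπ := Real.two_pi_pos
  have hnear : ∀ᶠ s in 𝓝 s₀, ∀ t ∈ Icc 0 (2 * Real.pi),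
      ‖k s t - k s₀ t‖ < ε / (2 * (2 * Real.pi)) := by
    refine isCompact_Icc.eventually_forall_of_forall_eventually fun t _ => ?_
    have hc : Continuous fun p : ℝ × ℝ => ‖k p.1 p.2 - k s₀ p.2‖ :=
      (hk.sub ((hks s₀).comp continuous_snd)).norm
    refine hc.continuousAt.eventually_lt continuousAt_const ?_
    rw [sub_self, norm_zero]
    positivity
  refine ⟨_, mem_nhdsWithin_of_mem_nhds hnear, ?_⟩
  filter_upwards [Metric.tendsto_nhds.1 (D.tendsto_integral_inv_pow_mul h0 (hks s₀) (hp s₀))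
    (ε / 2) (half_pos hε)] with n hn s hs
  rw [dist_zero_right] at hn
  rw [dist_zero_left]
  have hi : ∀ s, IntervalIntegrable (fun t => (circleMap 0 1 (τ t))⁻¹ ^ n * k s t) volume 0
      (2 * Real.pi) := fun s => ((D.continuous_inv_pow n).mul (hks s)).intervalIntegrable _ _
  have h2 : ‖(∫ t in 0..2 * Real.pi, (circleMap 0 1 (τ t))⁻¹ ^ n * k s t) -
      ∫ t in 0..2 * Real.pi, (circleMap 0 1 (τ t))⁻¹ ^ n * k s₀ t‖ ≤ ε / 2 := by
    rw [← intervalIntegral.integral_sub (hi s) (hi s₀)]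
    refine (intervalIntegral.norm_integral_le_of_norm_le_const
      (C := ε / (2 * (2 * Real.pi))) fun t ht => ?_).trans ?_
    · rw [uIoc_of_le hπ.le] at ht
      rw [← mul_sub, norm_mul, norm_inv_pow, one_mul]
      exact (hs t (Ioc_subset_Icc_self ht)).le
    · rw [sub_zero, abs_of_pos hπ]
      exact le_of_eq (by field_simp)
  calc _ ≤ _ := norm_le_norm_add_norm_sub' _ _
    _ < ε / 2 + ε / 2 := add_lt_add_of_lt_of_le hn h2
    _ = ε := add_halves ε

/-- A continuous truncation of `angKernel f f' s (t - s)`. -/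
def truncKernel (f f' : ℝ → ℂ) (δ s t : ℝ) : ℝ :=
  (f' t * starRingEnd ℂ (f t - f s)).im / max (‖f t - f s‖ ^ 2) (δ ^ 2)

lemma angKernel_eq (f f' : ℝ → ℂ) (s x : ℝ) : angKernel f f' s x =
    (f' (s + x) * starRingEnd ℂ (f (s + x) - f s)).im / ‖f (s + x) - f s‖ ^ 2 := by
  rw [angKernel, div_eq_mul_inv, Complex.inv_def, ← mul_assoc, ← Complex.normSq_eq_norm_sq,
    Complex.im_mul_ofReal, div_eq_mul_inv]

lemma truncKernel_eq {f f' : ℝ → ℂ} {δ s x : ℝ} (hδ : 0 ≤ δ) (h : δ ≤ ‖f (s + x) - f s‖) :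
    truncKernel f f' δ s (s + x) = angKernel f f' s x := by
  rw [angKernel_eq, truncKernel, max_eq_left (by gcongr)]

lemma abs_angKernel_sub_truncKernel_le {f f' : ℝ → ℂ} {δ s x : ℝ} :
    |angKernel f f' s x - truncKernel f f' δ s (s + x)| ≤ |angKernel f f' s x| := by
  rw [angKernel_eq, truncKernel]
  set A := (f' (s + x) * starRingEnd ℂ (f (s + x) - f s)).im with hA
  rcases eq_or_ne (f (s + x) - f s) 0 with h | h
  · have : A = 0 := by rw [hA, h]; simp
    simp [this]
  have hn : 0 < ‖f (s + x) - f s‖ ^ 2 := by positivity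
  have h1 : 1 / max (‖f (s + x) - f s‖ ^ 2) (δ ^ 2) ≤ 1 / ‖f (s + x) - f s‖ ^ 2 := by
    gcongr
    exact le_max_left _ _
  have h2 : 0 ≤ 1 / max (‖f (s + x) - f s‖ ^ 2) (δ ^ 2) := by positivity
  rw [div_eq_mul_one_div A, div_eq_mul_one_div A, ← mul_sub, abs_mul, abs_mul,
    abs_of_nonneg (sub_nonneg.2 h1), abs_of_nonneg (h2.trans h1)]
  gcongr
  linarith

namespace DiniDiskParam

variable {Ψ : ℂ → ℂ} {f f' : ℝ → ℂ} {τ ω : ℝ → ℝ}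

lemma continuous_truncKernel (D : DiniDiskParam Ψ f f' τ ω) {δ : ℝ} (hδ : 0 < δ) :
    Continuous fun p : ℝ × ℝ => truncKernel f f' δ p.1 p.2 := by
  have hf := D.continuous
  have hf' := D.continuous_deriv
  unfold truncKernel
  refine Continuous.div (Complex.continuous_im.comp ((hf'.comp continuous_snd).mul
    (Complex.continuous_conj.comp (by fun_prop)))) (by fun_prop) fun p => ?_
  exact ((pow_pos hδ 2).trans_le (le_max_right _ _)).ne'

lemma tendsto_integral_indicator_modulus (D : DiniDiskParam Ψ f f' τ ω) (C : ℝ) :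
    Tendsto (fun r : ℝ => ∫ x in -Real.pi..Real.pi,
      {x : ℝ | |x| < r}.indicator (fun x => C * (ω |x| / |x|)) x) (𝓝[>] 0) (𝓝 0) := by
  have h := D.intervalIntegrable_modulus_div.const_mul C
  have hm : ∀ r : ℝ, MeasurableSet {x : ℝ | |x| < r} := fun r =>
    measurableSet_lt continuous_abs.measurable measurable_const
  have := intervalIntegral.tendsto_integral_filter_of_dominated_convergence (μ := volume)
    (a := -Real.pi) (b := Real.pi) (l := 𝓝[>] (0 : ℝ))
    (F := fun r => {x : ℝ | |x| < r}.indicator (fun x => C * (ω |x| / |x|)))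
    (f := fun _ => 0) (fun x => ‖C * (ω |x| / |x|)‖)
    (Eventually.of_forall fun r => (intervalIntegrable_iff.1 h).aestronglyMeasurable.indicator
      (hm r))
    (Eventually.of_forall fun r => Eventually.of_forall fun x _ => norm_indicator_le_norm_self _ _)
    h.norm ?_
  · simpa using this
  · filter_upwards [Measure.ae_ne volume 0] with x hx _
    refine tendsto_const_nhds.congr' ?_
    filter_upwards [mem_nhdsWithin_of_mem_nhds (Iio_mem_nhds (abs_pos.2 hx))] with r hr
    rw [indicator_of_notMem]
    exact not_lt.2 (le_of_lt (mem_Iio.1 hr))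

lemma exists_norm_integral_sub_truncKernel_le (D : DiniDiskParam Ψ f f' τ ω) {ε : ℝ}
    (hε : 0 < ε) : ∃ δ, 0 < δ ∧ ∀ (n : ℕ) (s : ℝ),
      ‖(∫ x in -Real.pi..Real.pi, (circleMap 0 1 (τ (s + x)))⁻¹ ^ n * angKernel f f' s x) -
        ∫ x in -Real.pi..Real.pi, (circleMap 0 1 (τ (s + x)))⁻¹ ^ n *
          truncKernel f f' δ s (s + x)‖ < ε := by
  obtain ⟨κ, η₀, hκ, hη₀, hb⟩ := D.exists_mul_abs_le_norm_sub
  have hb' : ∀ s x, |x| ≤ Real.pi → κ * |x| ≤ ‖f (s + x) - f s‖ := fun s x hx => by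
    simpa only [normalShift_zero] using hb s x 0 hx (by simpa using hη₀.le)
  have hπ : -Real.pi ≤ Real.pi := by linarith [Real.pi_pos]
  obtain ⟨r, hr, hr0⟩ := (((D.tendsto_integral_indicator_modulus (2 / κ)).eventually_lt_const
    hε).and self_mem_nhdsWithin).exists
  have hr0' : 0 < r := hr0
  have hδ : 0 < κ * r := mul_pos hκ hr0'
  have hint := D.intervalIntegrable_modulus_div.const_mul (2 / κ)
  refine ⟨κ * r, hδ, fun n s => ?_⟩
  have hqc : Continuous fun x => (circleMap 0 1 (τ (s + x)))⁻¹ ^ n :=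
    (D.continuous_inv_pow n).comp (continuous_const_add s)
  have hKi : IntervalIntegrable (fun x => (angKernel f f' s x : ℂ)) volume (-Real.pi)
      Real.pi := by
    refine hint.mono_fun (Complex.measurable_ofReal.comp
      (D.measurable_angKernel s)).aestronglyMeasurable ?_
    rw [Filter.EventuallyLE, ae_restrict_iff' measurableSet_uIoc]
    filter_upwards [Measure.ae_ne volume 0] with x hx hxI
    rw [uIoc_of_le hπ] at hxI
    rw [Complex.norm_real, Real.norm_eq_abs]
    exact (D.abs_angKernel_le hκ hx (hb' s x (abs_le.2 ⟨hxI.1.le, hxI.2⟩))).trans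
      (le_abs_self _)
  have hTc : Continuous fun x => (truncKernel f f' (κ * r) s (s + x) : ℂ) :=
    Complex.continuous_ofReal.comp ((D.continuous_truncKernel hδ).comp
      (by fun_prop : Continuous fun x : ℝ => (s, s + x)))
  rw [← intervalIntegral.integral_sub (hKi.continuousOn_mul hqc.continuousOn)
    ((hqc.fun_mul hTc).intervalIntegrable _ _)]
  refine (intervalIntegral.norm_integral_le_of_norm_le hπ ?_ ?_).trans_lt hr
  · filter_upwards [Measure.ae_ne volume 0] with x hx hxI
    have hx' : |x| ≤ Real.pi := abs_le.2 ⟨hxI.1.le, hxI.2⟩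
    rw [← mul_sub, norm_mul, DiskParam.norm_inv_pow (fun x => τ (s + x)), one_mul,
      ← Complex.ofReal_sub, Complex.norm_real, Real.norm_eq_abs]
    by_cases hxr : |x| < r
    · rw [indicator_of_mem (show x ∈ {x : ℝ | |x| < r} from hxr)]
      exact abs_angKernel_sub_truncKernel_le.trans (D.abs_angKernel_le hκ hx (hb' s x hx'))
    · rw [indicator_of_notMem (show x ∉ {x : ℝ | |x| < r} from hxr), truncKernel_eq hδ.le,
        sub_self, abs_zero]
      exact (mul_le_mul_of_nonneg_left (not_lt.1 hxr) hκ.le).trans (hb' s x hx')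
  · rw [intervalIntegrable_iff] at hint ⊢
    exact hint.indicator (measurableSet_lt continuous_abs.measurable measurable_const)

lemma tendstoUniformlyOn_integral_angKernel (D : DiniDiskParam Ψ f f' τ ω) {K : Set ℝ}
    (hK : IsCompact K) :
    TendstoUniformlyOn (fun (n : ℕ) s => ∫ x in -Real.pi..Real.pi,
      (circleMap 0 1 (τ (s + x)))⁻¹ ^ n * angKernel f f' s x) (fun _ => 0) atTop K := by
  rw [Metric.tendstoUniformlyOn_iff]
  intro ε hε
  obtain ⟨δ, hδ, hδ'⟩ := D.exists_norm_integral_sub_truncKernel_le (half_pos hε)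
  have hper : ∀ s, Function.Periodic (fun t => (truncKernel f f' δ s t : ℂ)) (2 * Real.pi) :=
    fun s t => by simp only [truncKernel, D.periodic t, D.periodic_deriv t]
  have hunif := D.tendstoUniformlyOn_integral D.deriv_ne_zero
    (k := fun s t => (truncKernel f f' δ s t : ℂ))
    (Complex.continuous_ofReal.comp (D.continuous_truncKernel hδ)) hper hK
  filter_upwards [Metric.tendstoUniformlyOn_iff.1 hunif (ε / 2) (half_pos hε)] with n hn s hs
  have h1 := hn s hs
  have hp : Function.Periodic (fun t => (circleMap 0 1 (τ t))⁻¹ ^ n *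
      (truncKernel f f' δ s t : ℂ)) (2 * Real.pi) := fun t => by
    have h2 := D.periodic_circleMap_arg t
    have h3 := hper s t
    simp only at h2 h3
    simp only [h2, h3]
  rw [dist_zero_left, hp.intervalIntegral_eq_centered s] at h1
  rw [dist_zero_left]
  calc _ ≤ _ := norm_le_norm_add_norm_sub' _ _
    _ < ε / 2 + ε / 2 := add_lt_add h1 (hδ' n s)
    _ = ε := add_halves ε

end DiniDiskParam

lemma Function.Periodic.exists_mem_Icc_eq {f : ℝ → ℂ} {T : ℝ} (hf : Function.Periodic f T)
    (hT : 0 < T) {z : ℂ} (hz : z ∈ range f) : ∃ s ∈ Icc 0 T, f s = z := by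
  obtain ⟨t, rfl⟩ := hz
  obtain ⟨s, hs, h⟩ := hf.exists_mem_Ico₀ hT t
  exact ⟨s, Ico_subset_Icc_self hs, h.symm⟩

lemma abs_supNorm_sub_one_le {Γ : Set ℂ} (hne : Γ.Nonempty) {g : ℂ → ℂ} {ε : ℝ}
    (h : ∀ z ∈ Γ, |‖g z‖ - 1| ≤ ε) : |supNorm Γ g - 1| ≤ ε := by
  have hle : ∀ b ∈ (fun z => ‖g z‖) '' Γ, b ≤ 1 + ε := by
    rintro _ ⟨z, hz, rfl⟩
    linarith [(abs_le.1 (h z hz)).2]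
  obtain ⟨z, hz⟩ := hne
  have h1 : supNorm Γ g ≤ 1 + ε := csSup_le ⟨_, z, hz, rfl⟩ hle
  have h2 : ‖g z‖ ≤ supNorm Γ g := le_csSup ⟨_, hle⟩ ⟨z, hz, rfl⟩
  rw [abs_le]
  constructor <;> linarith [(abs_le.1 (h z hz)).1]

/-- If `Γ` is a Dini-smooth Jordan curve, then `φ(z)^{−n} F_n(z) → 1`
uniformly for `z ∈ Γ` (with `φb` the continuous boundary extension of `φ`), and in
particular `lim_{n→∞} ‖F_n‖_Γ = 1`. -/
theorem faber_norm_tendsto_one_of_diniSmooth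
    (Γ : Set ℂ) (φ ψ φb : ℂ → ℂ) (c : ℝ) (F : ℕ → Polynomial ℂ)
    (hΓ : IsDiniSmoothJordanCurve Γ)
    (hφ : IsExteriorMap Γ φ c)
    (hψ : IsExteriorParam Γ φ ψ)
    (hF : ∀ n : ℕ, IsFaberPoly Γ φ n (F n))
    (hφb_eq : ∀ z ∈ exteriorDomain Γ, φb z = φ z)
    (hφb_cont : ContinuousOn φb (exteriorDomain Γ ∪ Γ))
    (hφb_circle : ∀ w : ℂ, ‖w‖ = 1 → φb (ψ w) = w) :
    TendstoUniformlyOn (fun (n : ℕ) (z : ℂ) => (φb z ^ n)⁻¹ * (F n).eval z)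
        (fun _ => 1) Filter.atTop Γ ∧
    Filter.Tendsto (fun n : ℕ => supNorm Γ (fun z => (F n).eval z)) Filter.atTop (nhds 1) := by
  obtain ⟨hcomp, f, f', τ, ω, D, rfl, hφf⟩ :=
    exists_diniDiskParam hΓ hφ hψ hφb_eq hφb_cont hφb_circle
  have hφf' : ∀ s, φb (f s) = (circleMap 0 1 (τ s))⁻¹ := fun s => eq_inv_of_mul_eq_one_left (hφf s)
  have hnorm : ∀ s, ‖φb (f s)‖ = 1 := fun s => by simp [hφf']
  have hd : ∀ z ∉ range f, (∀ u ∈ Metric.closedBall (0 : ℂ) 1, diskParamOf ψ c u - z * u ≠ 0) ∨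
      ∫ t in 0..2 * Real.pi, f' t / (f t - z) = 0 := by
    intro z hz
    by_cases h : z ∈ exteriorDomain (range f)
    · exact .inr (integral_cauchy_eq_zero_of_mem_exteriorDomain D.hasDerivAt D.continuous_deriv
        D.periodic hcomp h)
    · exact .inl (diskParamOf_sub_mul_ne_zero hφ hψ (not_or.2 ⟨h, hz⟩))
  have key : ∀ ε > 0, ∀ᶠ n : ℕ in atTop, ∀ z ∈ range f,
      ‖(F n).eval z - φb z ^ n‖ < ε ∧ ‖φb z‖ = 1 := by
    intro ε hε
    filter_upwards [Metric.tendstoUniformlyOn_iff.1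
      (D.tendstoUniformlyOn_integral_angKernel (isCompact_Icc (a := 0) (b := 2 * Real.pi)))
      (Real.pi * ε) (by positivity), eventually_ge_atTop 1] with n hn hn1 z hz
    obtain ⟨s, hs, rfl⟩ := D.periodic.exists_mem_Icc_eq Real.two_pi_pos hz
    refine ⟨?_, hnorm s⟩
    have h := hn s hs
    rw [dist_zero_left] at h
    rw [D.eval_boundary_eq hd hn1
      ((hF n).tendsto_diskParamOf hcomp.isClosed hψ hφb_eq hφb_cont) s, hφf', sub_sub_cancel_left,
      norm_neg, norm_mul, norm_inv, Complex.norm_real, Real.norm_of_nonneg Real.pi_pos.le,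
      inv_mul_lt_iff₀ Real.pi_pos]
    exact h
  constructor
  · refine Metric.tendstoUniformlyOn_iff.2 fun ε hε => ?_
    filter_upwards [key ε hε] with n hn z hz
    obtain ⟨h, h1⟩ := hn z hz
    have h0 : φb z ^ n ≠ 0 := pow_ne_zero _ (norm_ne_zero_iff.1 (by simp [h1]))
    rwa [dist_comm, dist_eq_norm, ← inv_mul_cancel₀ h0, ← mul_sub, norm_mul, norm_inv, norm_pow,
      h1, one_pow, inv_one, one_mul]
  · refine Metric.tendsto_nhds.2 fun ε hε => ?_
    filter_upwards [key (ε / 2) (half_pos hε)] with n hn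
    refine (abs_supNorm_sub_one_le (range_nonempty f) fun z hz => ?_).trans_lt (half_lt_self hε)
    obtain ⟨h, h1⟩ := hn z hz
    simpa [h1] using (abs_norm_sub_norm_le ((F n).eval z) (φb z ^ n)).trans h.le

end
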